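/- arXiv:math/0308280 — 3 statements merged into one kernel-verified Lean document; each statement's English description precedes it below -/
import Mathlib

section
/- For a finite simple graph G, the toric ideal I_G is generated in degree ≤ 2 if and only if G is a forest (i.e., G contains no cycle). -/
open MvPolynomial Finset

namespace BinaryGraphModels

variable {V : Type} [Fintype V] [DecidableEq V]

/-- The monomial map `φ_G` of the binary graph model: the variable `p_I` is sent to the
product over edges `{j,k}` of the variable `t^{jk}_{I(j)I(k)}` (encoded as the unordered pair
`{(j, I j), (k, I k)}`) times the product over isolated vertices `l` of `t^{l}_{I(l)}`. -/
noncomputable def phi (G : SimpleGraph V) :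
    MvPolynomial (V → Bool) ℂ →ₐ[ℂ] MvPolynomial (Sym2 (V × Bool) ⊕ (V × Bool)) ℂ := by
  letI : DecidableRel G.Adj := Classical.decRel _
  exact aeval fun I : V → Bool =>
    (∏ e ∈ G.edgeFinset,
      (X (Sum.inl (Sym2.map (fun v => (v, I v)) e)) :
        MvPolynomial (Sym2 (V × Bool) ⊕ (V × Bool)) ℂ)) *
    ∏ l ∈ univ.filter (fun l : V => ∀ k, ¬ G.Adj l k), X (Sum.inr (l, I l))

/-- The toric ideal `I_G` of the binary graph model of `G`. -/
noncomputable def toricIdeal (G : SimpleGraph V) : Ideal (MvPolynomial (V → Bool) ℂ) :=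
  RingHom.ker (phi G).toRingHom

/-- `I_G` is generated in degree at most `d`. -/
def GenInDegLE (G : SimpleGraph V) (d : ℕ) : Prop :=
  toricIdeal G =
    Ideal.span {f : MvPolynomial (V → Bool) ℂ | f ∈ toricIdeal G ∧ f.totalDegree ≤ d}

/-- The Markov width `μ(G)`: the least `d` such that `I_G` is generated in degree `≤ d`. -/
noncomputable def markovWidth (G : SimpleGraph V) : ℕ :=
  sInf {d : ℕ | GenInDegLE G d}

/-- `f` is a minimal generator of `I_G`, i.e. `f ∈ I_G` and `f ∉ 𝔪 · I_G` where `𝔪` is the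
irrelevant maximal ideal generated by all the variables. -/
def IsMinimalGenerator (G : SimpleGraph V) (f : MvPolynomial (V → Bool) ℂ) : Prop :=
  f ∈ toricIdeal G ∧
    f ∉ Ideal.span (Set.range (X : (V → Bool) → MvPolynomial (V → Bool) ℂ)) * toricIdeal G

/-- Two integer tables have the same `G`-marginals: equal two-way marginals along every edge
and equal one-way marginals at every isolated vertex. -/
def MarginalsEq (G : SimpleGraph V) (v₁ v₂ : (V → Bool) → ℤ) : Prop :=
  (∀ j k : V, G.Adj j k → ∀ a b : Bool,
    (∑ I : V → Bool, if I j = a ∧ I k = b then v₁ I else 0) =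
    (∑ I : V → Bool, if I j = a ∧ I k = b then v₂ I else 0)) ∧
  (∀ l : V, (∀ k, ¬ G.Adj l k) → ∀ a : Bool,
    (∑ I : V → Bool, if I l = a then v₁ I else 0) =
    (∑ I : V → Bool, if I l = a then v₂ I else 0))

/-- `B` is a Markov basis for `G`: any two nonnegative tables with the same `G`-marginals are
connected by a path of moves from `±B` staying nonnegative. -/
def IsMarkovBasis (G : SimpleGraph V) (B : Finset ((V → Bool) → ℤ)) : Prop :=
  ∀ v₁ v₂ : (V → Bool) → ℤ, (∀ I, 0 ≤ v₁ I) → (∀ I, 0 ≤ v₂ I) →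
    MarginalsEq G v₁ v₂ →
    ∃ L : List ((V → Bool) → ℤ),
      (∀ u ∈ L, u ∈ B ∨ -u ∈ B) ∧
      v₁ + L.sum = v₂ ∧
      ∀ n : ℕ, n ≤ L.length → ∀ I, 0 ≤ (v₁ + (L.take n).sum) I

/-- The binomial `p^{u⁺} - p^{u⁻}` associated to an integer table `u`. -/
noncomputable def moveBinomial (u : (V → Bool) → ℤ) : MvPolynomial (V → Bool) ℂ :=
  (∏ I : V → Bool, X I ^ (u I).toNat) - ∏ I : V → Bool, X I ^ (-u I).toNat

end BinaryGraphModels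

namespace BinaryGraphModels

/-!
The product `p_{I₁} ⋯ p_{I_d}` is the multiset `{I₁, …, I_d}`, and `φ_G` records exactly its
marginals, so `I_G` is generated by the differences of two multisets with the same marginals. If
`I` and `J` agree across the edges leaving a vertex set `D`, exchanging their restrictions to `D`
is such a difference, of degree two.

In a forest the vertices can be listed so that each new vertex `v` lies in a set `D` that avoids the
earlier vertices and has at most one edge leaving it, from `v` to an earlier vertex.
Given `s` and `t` with the same marginals and `I ∈ t`, exchanges along these sets assemble `I`
inside `s`, one vertex at a time; remove `I` from both sides and repeat.

On a cycle, take two adjacent vertices and the remaining path as the three colour classes of a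
triangle. The even and the odd patterns on three colours have the same marginals, but two distinct
even patterns differ on two colour classes, which induce a connected subgraph, so nothing can be
exchanged between them. Hence no monomial of an element of `I_G` of degree at most two divides the
product of the even patterns, while this product does occur in a quartic element of `I_G`.
-/

section MonomialMaps

variable {σ τ R : Type*}

/-- The product of the variables indexed by the multiset `s`, with multiplicity. Monomials are
encoded by multisets rather than exponent vectors, so that the image of a monomial under a monomial
map is given by `Multiset.bind`. -/
noncomputable def varProd (R : Type*) [CommSemiring R] (s : Multiset σ) : MvPolynomial σ R :=
  (s.map X).prod

section CommSemiring

variable [CommSemiring R]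

@[simp] lemma varProd_zero : varProd R (0 : Multiset σ) = 1 := by simp [varProd]

@[simp] lemma varProd_cons (i : σ) (s : Multiset σ) :
    varProd R (i ::ₘ s) = X i * varProd R s := by simp [varProd]

@[simp] lemma varProd_singleton (i : σ) : varProd R {i} = X i := by simp [varProd]

lemma varProd_add (s t : Multiset σ) : varProd R (s + t) = varProd R s * varProd R t := by
  simp [varProd]

lemma varProd_toMultiset (m : σ →₀ ℕ) :
    varProd R (Finsupp.toMultiset m) = monomial m 1 := by
  rw [varProd, Finsupp.toMultiset_map, Finsupp.prod_toMultiset, monomial_eq, map_one, one_mul,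
    Finsupp.prod_mapDomain_index (by simp) (by simp [pow_add])]

lemma varProd_eq_monomial [DecidableEq σ] (s : Multiset σ) :
    varProd R s = monomial (Multiset.toFinsupp s) 1 := by
  rw [← varProd_toMultiset, Multiset.toFinsupp_toMultiset]

lemma varProd_injective [Nontrivial R] : Function.Injective (varProd R : Multiset σ → _) := by
  classical
  intro s t h
  rw [varProd_eq_monomial, varProd_eq_monomial] at h
  exact Multiset.toFinsupp.injective (monomial_left_injective one_ne_zero h)

lemma totalDegree_varProd_le (s : Multiset σ) : (varProd R s).totalDegree ≤ s.card := by
  classical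
  rw [varProd_eq_monomial, ← Multiset.toFinsupp_sum_eq]
  exact totalDegree_monomial_le _ _

variable {F : MvPolynomial σ R →ₐ[R] MvPolynomial τ R} {p : σ → Multiset τ}

lemma algHom_varProd (hF : ∀ i, F (X i) = varProd R (p i)) (s : Multiset σ) :
    F (varProd R s) = varProd R (s.bind p) := by
  induction s using Multiset.induction with
  | empty => simp
  | cons i s ih => simp [varProd_add, hF, ih]

lemma coeff_eq_zero_of_mem_ker (hF : ∀ i, F (X i) = varProd R (p i)) {f : MvPolynomial σ R}
    (hf : F f = 0) {m : σ →₀ ℕ}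
    (hm : ∀ t : Multiset σ, (Finsupp.toMultiset m).bind p = t.bind p → t = Finsupp.toMultiset m) :
    coeff m f = 0 := by
  classical
  suffices h : ∀ g : MvPolynomial σ R,
      coeff (Multiset.toFinsupp ((Finsupp.toMultiset m).bind p)) (F g) = coeff m g by
    rw [← h, hf, coeff_zero]
  intro g
  induction g using MvPolynomial.induction_on' with
  | monomial k c =>
    have same_fiber : (Finsupp.toMultiset k).bind p = (Finsupp.toMultiset m).bind p ↔ k = m :=
      ⟨fun h ↦ Finsupp.orderIsoMultiset.injective (hm _ h.symm), fun h ↦ by rw [h]⟩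
    rw [← mul_one c, ← smul_eq_mul, ← smul_monomial, map_smul, ← varProd_toMultiset,
      algHom_varProd hF, varProd_toMultiset, varProd_eq_monomial, coeff_smul, coeff_smul,
      coeff_monomial, coeff_monomial]
    simp only [EmbeddingLike.apply_eq_iff_eq, same_fiber]
  | add g g' hg hg' => simp only [map_add, coeff_add, hg, hg']

/-- The polynomials none of whose monomials divides `m` form an ideal. -/
lemma coeff_eq_zero_of_mem_span {A : Set (MvPolynomial σ R)} {m : σ →₀ ℕ}
    (hA : ∀ f ∈ A, ∀ k ≤ m, coeff k f = 0) {f : MvPolynomial σ R} (hf : f ∈ Ideal.span A) :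
    ∀ k ≤ m, coeff k f = 0 := by
  classical
  induction hf using Submodule.span_induction with
  | mem f hf => exact hA f hf
  | zero => simp
  | add f g _ _ hf hg => intro k hk; rw [coeff_add, hf k hk, hg k hk, add_zero]
  | smul a f _ hf =>
    intro k hk
    rw [smul_eq_mul, coeff_mul]
    refine Finset.sum_eq_zero fun x hx ↦ ?_
    have hx₂ : x.2 ≤ m := (le_add_self.trans_eq (mem_antidiagonal.1 hx)).trans hk
    rw [hf x.2 hx₂, mul_zero]

end CommSemiring

lemma ker_le_of_varProd_smodEq [CommRing R] {F : MvPolynomial σ R →ₐ[R] MvPolynomial τ R}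
    {p : σ → Multiset τ} (hF : ∀ i, F (X i) = varProd R (p i))
    {J : Ideal (MvPolynomial σ R)}
    (hJ : ∀ s t : Multiset σ, s.bind p = t.bind p → varProd R s ≡ varProd R t [SMOD J]) :
    RingHom.ker F ≤ J := by
  classical
  let rep : Multiset τ → Multiset σ := Function.invFun fun s ↦ s.bind p
  have bind_rep (s : Multiset σ) : (rep (s.bind p)).bind p = s.bind p :=
    Function.invFun_eq (f := fun s : Multiset σ ↦ s.bind p) ⟨s, rfl⟩
  let L : MvPolynomial τ R →ₗ[R] MvPolynomial σ R :=
    (basisMonomials τ R).constr ℕ fun k ↦ varProd R (rep (Finsupp.toMultiset k))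
  have L_varProd (u : Multiset τ) : L (varProd R u) = varProd R (rep u) := by
    have := (basisMonomials τ R).constr_basis ℕ
      (fun k ↦ varProd R (rep (Finsupp.toMultiset k))) (Multiset.toFinsupp u)
    simpa only [coe_basisMonomials, ← varProd_eq_monomial, Multiset.toFinsupp_toMultiset]
      using this
  have section_smodEq (f : MvPolynomial σ R) : L (F f) ≡ f [SMOD J] := by
    induction f using MvPolynomial.induction_on' with
    | monomial m c =>
      rw [← mul_one c, ← smul_eq_mul, ← smul_monomial, ← varProd_toMultiset, map_smul, map_smul,
        algHom_varProd hF, L_varProd, smul_eq_C_mul, smul_eq_C_mul]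
      exact (hJ _ _ (bind_rep _)).smul (C c)
    | add f g hf hg => simpa only [map_add] using hf.add hg
  intro f hf
  have := section_smodEq f
  rw [RingHom.mem_ker.1 hf, map_zero] at this
  exact SModEq.zero.1 this.symm

end MonomialMaps

section MultisetCounting

variable {α β : Type*} [DecidableEq β] {s t : Multiset α}

lemma map_eq_map_iff_countP {f : α → β} :
    s.map f = t.map f ↔ ∀ b, s.countP (fun a ↦ f a = b) = t.countP fun a ↦ f a = b := by
  simp only [Multiset.ext, Multiset.count_map, Multiset.countP_eq_card_filter, eq_comm]

lemma count_bind_of_nodup {f : α → Multiset β} (hf : ∀ a, (f a).Nodup) (b : β) :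
    (s.bind f).count b = s.countP fun a ↦ b ∈ f a := by
  induction s using Multiset.induction with
  | empty => simp
  | cons a s ih =>
    rw [Multiset.cons_bind, Multiset.count_add, ih, Multiset.countP_cons, add_comm,
      Multiset.count_eq_of_nodup (hf a)]

lemma bind_eq_bind_iff_countP {f : α → Multiset β} (hf : ∀ a, (f a).Nodup) :
    s.bind f = t.bind f ↔ ∀ b, s.countP (fun a ↦ b ∈ f a) = t.countP fun a ↦ b ∈ f a := by
  simp only [Multiset.ext, count_bind_of_nodup hf]

end MultisetCounting

section Marginals

variable {V : Type*} {G : SimpleGraph V} {I J : V → Bool} {s t u : Multiset (V → Bool)}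

/-- The multisets `s` and `t` of index strings have the same edge marginals and the same marginals
at the isolated vertices of `G`. -/
structure SameMarginals (G : SimpleGraph V) (s t : Multiset (V → Bool)) : Prop where
  edge ⦃j k : V⦄ (hjk : G.Adj j k) : s.map (fun I ↦ (I j, I k)) = t.map fun I ↦ (I j, I k)
  isolated ⦃l : V⦄ (hl : ∀ k, ¬ G.Adj l k) : s.map (fun I ↦ I l) = t.map fun I ↦ I l

namespace SameMarginals

lemma symm (h : SameMarginals G s t) : SameMarginals G t s :=
  ⟨fun _ _ hjk ↦ (h.edge hjk).symm, fun _ hl ↦ (h.isolated hl).symm⟩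

lemma trans (h : SameMarginals G s t) (h' : SameMarginals G t u) : SameMarginals G s u :=
  ⟨fun _ _ hjk ↦ (h.edge hjk).trans (h'.edge hjk),
    fun _ hl ↦ (h.isolated hl).trans (h'.isolated hl)⟩

lemma add_right_iff : SameMarginals G (s + u) (t + u) ↔ SameMarginals G s t := by
  constructor
  · refine fun h ↦ ⟨fun j k hjk ↦ ?_, fun l hl ↦ ?_⟩
    · simpa only [Multiset.map_add, add_left_inj] using h.edge hjk
    · simpa only [Multiset.map_add, add_left_inj] using h.isolated hl
  · refine fun h ↦ ⟨fun j k hjk ↦ ?_, fun l hl ↦ ?_⟩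
    · rw [Multiset.map_add, Multiset.map_add, h.edge hjk]
    · rw [Multiset.map_add, Multiset.map_add, h.isolated hl]

lemma cons_iff : SameMarginals G (I ::ₘ s) (I ::ₘ t) ↔ SameMarginals G s t := by
  rw [← Multiset.singleton_add, ← Multiset.singleton_add, add_comm _ s, add_comm _ t,
    add_right_iff]

lemma vertex (h : SameMarginals G s t) (v : V) :
    s.map (fun I ↦ I v) = t.map fun I ↦ I v := by
  by_cases hv : ∀ w, ¬ G.Adj v w
  · exact h.isolated hv
  · obtain ⟨w, hvw⟩ := not_forall_not.1 hv
    simpa only [Multiset.map_map, Function.comp_def]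
      using congrArg (Multiset.map Prod.fst) (h.edge hvw)

lemma exists_mem_eq (h : SameMarginals G s t) (hI : I ∈ t) (v : V) : ∃ J ∈ s, J v = I v :=
  Multiset.mem_map.1 (h.vertex v ▸ Multiset.mem_map_of_mem (fun I ↦ I v) hI)

lemma exists_mem_eq_of_adj (h : SameMarginals G s t) (hI : I ∈ t) {v w : V} (hvw : G.Adj v w) :
    ∃ J ∈ s, J v = I v ∧ J w = I w := by
  obtain ⟨J, hJ, hJI⟩ := Multiset.mem_map.1
    (h.edge hvw ▸ Multiset.mem_map_of_mem (fun J : V → Bool ↦ (J v, J w)) hI)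
  exact ⟨J, hJ, Prod.mk.inj hJI⟩

lemma of_isEmpty [IsEmpty V] : SameMarginals G s t :=
  ⟨isEmptyElim, isEmptyElim⟩

lemma isEmpty_of_cons_zero (h : SameMarginals G (I ::ₘ s) 0) : IsEmpty V :=
  ⟨fun v ↦ by simpa using h.vertex v⟩

end SameMarginals

end Marginals

section Parameters

variable {V : Type*} [Fintype V] {G : SimpleGraph V} {I : V → Bool} {s t : Multiset (V → Bool)}

open scoped Classical in
/-- The indices of the variables dividing `φ_G(p_I)`, which is the product of these variables. -/
noncomputable def parameters (G : SimpleGraph V) (I : V → Bool) :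
    Multiset (Sym2 (V × Bool) ⊕ (V × Bool)) :=
  G.edgeFinset.val.map (fun e ↦ Sum.inl (e.map fun v ↦ (v, I v))) +
    ({l | ∀ k, ¬ G.Adj l k} : Finset V).val.map fun l ↦ Sum.inr (l, I l)

lemma edge_mem_parameters {j k : V} {a b : Bool} :
    Sum.inl s((j, a), (k, b)) ∈ parameters G I ↔ G.Adj j k ∧ (I j, I k) = (a, b) := by
  classical
  simp only [parameters, Multiset.mem_add, Multiset.mem_map, Finset.mem_val,
    SimpleGraph.mem_edgeFinset, Sum.inl.injEq, reduceCtorEq, and_false, exists_false, or_false]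
  constructor
  · rintro ⟨e, he, h⟩
    induction e with | _ x y
    simp only [Sym2.map_mk, Sym2.eq_iff, Prod.mk.injEq] at h
    rcases h with ⟨⟨rfl, rfl⟩, rfl, rfl⟩ | ⟨⟨rfl, rfl⟩, rfl, rfl⟩
    · exact ⟨he, rfl⟩
    · exact ⟨G.adj_symm he, rfl⟩
  · rintro ⟨hjk, h⟩
    obtain ⟨rfl, rfl⟩ := Prod.mk.inj h
    exact ⟨s(j, k), hjk, rfl⟩

lemma vertex_mem_parameters {l : V} {a : Bool} :
    Sum.inr (l, a) ∈ parameters G I ↔ (∀ k, ¬ G.Adj l k) ∧ I l = a := by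
  classical
  simp [parameters]

lemma nodup_parameters : (parameters G I).Nodup := by
  classical
  refine Multiset.nodup_add.2 ⟨?_, ?_, ?_⟩
  · exact G.edgeFinset.nodup.map
      (Sum.inl_injective.comp (Sym2.map.injective fun _ _ h ↦ congrArg Prod.fst h))
  · exact (Finset.nodup _).map (Sum.inr_injective.comp fun _ _ h ↦ congrArg Prod.fst h)
  · simp [Multiset.disjoint_left]

lemma bind_parameters_eq_iff :
    s.bind (parameters G) = t.bind (parameters G) ↔ SameMarginals G s t := by
  classical
  rw [bind_eq_bind_iff_countP fun _ ↦ nodup_parameters]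
  constructor
  · refine fun h ↦ ⟨fun j k hjk ↦ map_eq_map_iff_countP.2 fun ⟨a, b⟩ ↦ ?_,
      fun l hl ↦ map_eq_map_iff_countP.2 fun a ↦ ?_⟩
    · simpa only [edge_mem_parameters, hjk, true_and] using h (Sum.inl s((j, a), (k, b)))
    · simpa only [vertex_mem_parameters, hl, not_false_eq_true, implies_true, true_and]
        using h (Sum.inr (l, a))
  · rintro h (e | ⟨l, a⟩)
    · induction e with | _ x y
      rcases x with ⟨j, a⟩
      rcases y with ⟨k, b⟩
      by_cases hjk : G.Adj j k
      · simpa only [edge_mem_parameters, hjk, true_and]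
          using map_eq_map_iff_countP.1 (h.edge hjk) (a, b)
      · simp [edge_mem_parameters, hjk]
    · by_cases hl : ∀ k, ¬ G.Adj l k
      · simpa only [vertex_mem_parameters, hl, not_false_eq_true, implies_true, true_and]
          using map_eq_map_iff_countP.1 (h.isolated hl) a
      · simp [vertex_mem_parameters, hl]

lemma phi_X {V : Type} [Fintype V] {G : SimpleGraph V} (I : V → Bool) :
    phi G (X I) = varProd ℂ (parameters G I) := by
  rw [phi, aeval_X, varProd, parameters, Multiset.map_add, Multiset.prod_add, Multiset.map_map,
    Multiset.map_map]
  rfl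

end Parameters

section ForestInduction

variable {V : Type*} {G : SimpleGraph V} {S : Set V} {v w : V}

lemma spanningCoe_induce_adj {x y : V} :
    (G.induce S).spanningCoe.Adj x y ↔ G.Adj x y ∧ x ∈ S ∧ y ∈ S := by
  simp

lemma spanningCoe_induce_mono {T : Set V} (h : S ⊆ T) :
    (G.induce S).spanningCoe ≤ (G.induce T).spanningCoe := by
  intro x y hxy
  rw [spanningCoe_induce_adj] at hxy ⊢
  exact ⟨hxy.1, h hxy.2.1, h hxy.2.2⟩

/-- Vertices of `S` that are connected in `G` are already connected inside `S`. This is the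
invariant under which the vertices of a forest can be added to `S` one at a time. -/
def IsReachConvex (G : SimpleGraph V) (S : Set V) : Prop :=
  ∀ x ∈ S, ∀ y ∈ S, G.Reachable x y → (G.induce S).spanningCoe.Reachable x y

lemma IsReachConvex.insert_vertex (hS : IsReachConvex G S)
    (hv : ∀ y ∈ S, G.Reachable v y → ∃ w ∈ S, G.Adj v w) : IsReachConvex G (insert v S) := by
  have hmono := spanningCoe_induce_mono (G := G) (Set.subset_insert v S)
  have reach_v : ∀ y ∈ S, G.Reachable v y →
      (G.induce (insert v S)).spanningCoe.Reachable v y := by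
    intro y hy hvy
    obtain ⟨w, hw, hvw⟩ := hv y hy hvy
    have hadj : (G.induce (insert v S)).spanningCoe.Adj v w := by
      simp [hvw, hw]
    exact hadj.reachable.trans
      ((hS w hw y hy (hvw.symm.reachable.trans hvy)).mono hmono)
  rintro x (rfl | hx) y (rfl | hy) hxy
  · rfl
  · exact reach_v y hy hxy
  · exact (reach_v x hx hxy.symm).symm
  · exact (hS x hx y hy hxy).mono hmono

lemma IsReachConvex.disjoint_of_isBridge (hS : IsReachConvex G S) (hv : v ∉ S) (hw : w ∈ S)
    (hvw : G.Adj v w) (hbridge : G.IsBridge s(v, w)) :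
    Disjoint {x | (G.deleteEdges {s(v, w)}).Reachable v x} S := by
  refine Set.disjoint_left.2 fun x hvx hx ↦ SimpleGraph.isBridge_iff.1 hbridge ?_
  have hle : (G.induce S).spanningCoe ≤ G.deleteEdges {s(v, w)} := by
    intro a b hab
    obtain ⟨hab, ha, hb⟩ := spanningCoe_induce_adj.1 hab
    refine SimpleGraph.deleteEdges_adj.2 ⟨hab, fun h ↦ hv ?_⟩
    rcases Sym2.eq_iff.1 h with ⟨rfl, rfl⟩ | ⟨rfl, rfl⟩ <;> assumption
  have hwx : G.Reachable w x :=
    hvw.symm.reachable.trans (hvx.mono (SimpleGraph.deleteEdges_le _))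
  exact SimpleGraph.Reachable.trans hvx ((hS w hw x hx hwx).mono hle).symm

lemma eq_of_adj_of_reachable_deleteEdges {x y : V}
    (hx : (G.deleteEdges {s(v, w)}).Reachable v x)
    (hy : ¬ (G.deleteEdges {s(v, w)}).Reachable v y) (hxy : G.Adj x y) : y = w := by
  have hedge : s(x, y) = s(v, w) := by
    by_contra hne
    exact hy (hx.trans (SimpleGraph.deleteEdges_adj.2 ⟨hxy, hne⟩).reachable)
  rcases Sym2.eq_iff.1 hedge with ⟨-, rfl⟩ | ⟨-, rfl⟩
  · rfl
  · exact absurd (SimpleGraph.Reachable.refl _) hy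

/-- List the vertices so that each tree grows outwards from a root: a new vertex `v` is either a
root, with `D` the complement of `S`, or is adjacent to some `w ∈ S`, with `D` the component of `v`
after deletion of the bridge `vw`. -/
theorem forest_induction [Finite V] (hG : G.IsAcyclic) {P : Set V → Prop} (empty : P ∅)
    (closed : ∀ (S D : Set V) (v : V), v ∈ D → Disjoint D S →
      (∀ x ∈ D, ∀ y ∉ D, ¬ G.Adj x y) → P S → P (insert v S))
    (pendant : ∀ (S D : Set V) (v w : V), v ∈ D → Disjoint D S → w ∈ S → G.Adj v w →
      (∀ x ∈ D, ∀ y ∉ D, G.Adj x y → y = w) → P S → P (insert v S)) :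
    P Set.univ := by
  obtain ⟨S, -, ⟨hPS, hS⟩, hmax⟩ :=
    Finite.exists_le_maximal (p := fun S ↦ P S ∧ IsReachConvex G S) (a := ∅)
      ⟨empty, by simp [IsReachConvex]⟩
  suffices huniv : S = Set.univ from huniv ▸ hPS
  by_contra hne
  obtain ⟨v, hv, hP, hconv⟩ : ∃ v ∉ S, P (insert v S) ∧ IsReachConvex G (insert v S) := by
    by_cases hex : ∃ v ∉ S, ∃ w ∈ S, G.Adj v w
    · obtain ⟨v, hv, w, hw, hvw⟩ := hex
      have hbridge := SimpleGraph.isAcyclic_iff_forall_adj_isBridge.1 hG hvw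
      exact ⟨v, hv,
        pendant S _ v w (SimpleGraph.Reachable.refl _)
          (hS.disjoint_of_isBridge hv hw hvw hbridge) hw hvw
          (fun _ hx _ hy ↦ eq_of_adj_of_reachable_deleteEdges hx hy) hPS,
        hS.insert_vertex fun _ _ _ ↦ ⟨w, hw, hvw⟩⟩
    · push Not at hex
      obtain ⟨v, hv⟩ := (Set.ne_univ_iff_exists_notMem S).1 hne
      refine ⟨v, hv, closed S Sᶜ v hv disjoint_compl_left
        (fun x hx y hy ↦ hex x hx y (not_not.1 hy)) hPS, hS.insert_vertex ?_⟩
      rintro y hy ⟨p⟩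
      obtain ⟨d, -, hd, hd'⟩ := p.exists_boundary_dart Sᶜ hv (by simpa using hy)
      exact absurd d.adj (hex _ hd _ (not_not.1 hd'))
  exact hv (hmax ⟨hP, hconv⟩ (Set.subset_insert v S) (Set.mem_insert v S))

end ForestInduction

section LowDegree

variable {V : Type} [Fintype V] {G : SimpleGraph V} {s t : Multiset (V → Bool)} {d : ℕ}

/-- The ideal generated by the elements of degree at most `d` of `I_G`, so that `GenInDegLE G d`
says that `I_G` is equal to it. -/
noncomputable def lowDegreeIdeal (G : SimpleGraph V) (d : ℕ) : Ideal (MvPolynomial (V → Bool) ℂ) :=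
  Ideal.span {f | f ∈ toricIdeal G ∧ f.totalDegree ≤ d}

lemma lowDegreeIdeal_le_toricIdeal : lowDegreeIdeal G d ≤ toricIdeal G :=
  Ideal.span_le.2 fun _ hf ↦ hf.1

lemma varProd_smodEq_toricIdeal_iff :
    varProd ℂ s ≡ varProd ℂ t [SMOD toricIdeal G] ↔ SameMarginals G s t := by
  rw [SModEq.sub_mem, toricIdeal, RingHom.mem_ker, map_sub, sub_eq_zero, AlgHom.toRingHom_eq_coe,
    RingHom.coe_coe, algHom_varProd phi_X, algHom_varProd phi_X, varProd_injective.eq_iff,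
    bind_parameters_eq_iff]

lemma SameMarginals.smodEq_lowDegreeIdeal (h : SameMarginals G s t) (hs : s.card ≤ d)
    (ht : t.card ≤ d) : varProd ℂ s ≡ varProd ℂ t [SMOD lowDegreeIdeal G d] := by
  refine SModEq.sub_mem.2 (Ideal.subset_span
    ⟨SModEq.sub_mem.1 (varProd_smodEq_toricIdeal_iff.2 h), ?_⟩)
  exact (totalDegree_sub _ _).trans (max_le ((totalDegree_varProd_le s).trans hs)
    ((totalDegree_varProd_le t).trans ht))

lemma sameMarginals_of_smodEq_lowDegreeIdeal
    (h : varProd ℂ s ≡ varProd ℂ t [SMOD lowDegreeIdeal G d]) : SameMarginals G s t :=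
  varProd_smodEq_toricIdeal_iff.1 (h.mono lowDegreeIdeal_le_toricIdeal)

end LowDegree

section Exchange

variable {V : Type*} {G : SimpleGraph V} {I J : V → Bool}

lemma sameMarginals_piecewise {D : Set V} [∀ x, Decidable (x ∈ D)]
    (h : ∀ x ∈ D, ∀ y ∉ D, G.Adj x y → I y = J y) :
    SameMarginals G {I, J} {D.piecewise J I, D.piecewise I J} := by
  refine ⟨fun j k hjk ↦ ?_, fun l _ ↦ ?_⟩
  · by_cases hj : j ∈ D <;> by_cases hk : k ∈ D
    · simpa [hj, hk] using Multiset.pair_comm (I j, I k) (J j, J k)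
    · simpa [hj, hk, h j hj k hk hjk] using Multiset.pair_comm (I j, J k) (J j, J k)
    · simpa [hj, hk, h k hk j hj hjk.symm] using Multiset.pair_comm (J j, I k) (J j, J k)
    · simp [hj, hk]
  · by_cases hl : l ∈ D
    · simpa [hl] using Multiset.pair_comm (I l) (J l)
    · simp [hl]

end Exchange

section Forests

variable {V : Type} [Fintype V] {G : SimpleGraph V} {I J : V → Bool} {s t : Multiset (V → Bool)}

lemma exists_smodEq_cons_eqOn_insert {S D : Set V} {v : V} (hv : v ∈ D) (hDS : Disjoint D S)
    (hJ : Set.EqOn J I S) {J' : V → Bool} (hJ' : J' ∈ J ::ₘ s) (hJ'v : J' v = I v)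
    (hD : ∀ x ∈ D, ∀ y ∉ D, G.Adj x y → J y = J' y) :
    ∃ K u, varProd ℂ (J ::ₘ s) ≡ varProd ℂ (K ::ₘ u) [SMOD lowDegreeIdeal G 2] ∧
      Set.EqOn K I (insert v S) := by
  classical
  rcases Multiset.mem_cons.1 hJ' with rfl | hJ's
  · exact ⟨J', s, .rfl, Set.forall_mem_insert.2 ⟨hJ'v, @hJ⟩⟩
  obtain ⟨s, rfl⟩ := Multiset.exists_cons_of_mem hJ's
  refine ⟨D.piecewise J' J, D.piecewise J J' ::ₘ s, ?_, ?_⟩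
  · have hswap := (sameMarginals_piecewise hD).smodEq_lowDegreeIdeal (d := 2) (by simp) (by simp)
    simpa [mul_assoc] using hswap.mul (SModEq.refl (varProd ℂ s))
  · rintro x (rfl | hx)
    · simp [hv, hJ'v]
    · simp [Set.disjoint_right.1 hDS hx, hJ hx]

lemma exists_smodEq_cons (hG : G.IsAcyclic) (h : SameMarginals G s t) (hI : I ∈ t) :
    ∃ u, varProd ℂ s ≡ varProd ℂ (I ::ₘ u) [SMOD lowDegreeIdeal G 2] := by
  suffices ∃ J u, varProd ℂ s ≡ varProd ℂ (J ::ₘ u) [SMOD lowDegreeIdeal G 2] ∧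
      Set.EqOn J I Set.univ by
    obtain ⟨J, u, hu, hJ⟩ := this
    obtain rfl : J = I := (Set.eqOn_univ J I).1 hJ
    exact ⟨u, hu⟩
  refine forest_induction hG (P := fun S ↦ ∃ J u,
    varProd ℂ s ≡ varProd ℂ (J ::ₘ u) [SMOD lowDegreeIdeal G 2] ∧ Set.EqOn J I S) ?_ ?_ ?_
  · rcases s.empty_or_exists_mem with rfl | ⟨J, hJ⟩
    · obtain ⟨t, rfl⟩ := Multiset.exists_cons_of_mem hI
      have := h.symm.isEmpty_of_cons_zero
      exact ⟨I, 0, SameMarginals.of_isEmpty.smodEq_lowDegreeIdeal (by simp) (by simp), by simp⟩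
    · obtain ⟨u, rfl⟩ := Multiset.exists_cons_of_mem hJ
      exact ⟨J, u, .rfl, by simp⟩
  · rintro S D v hv hDS hD ⟨J, u, hu, hJ⟩
    obtain ⟨J', hJ', hJ'v⟩ :=
      ((sameMarginals_of_smodEq_lowDegreeIdeal hu).symm.trans h).exists_mem_eq hI v
    obtain ⟨K, u', hu', hK⟩ := exists_smodEq_cons_eqOn_insert hv hDS hJ hJ' hJ'v
      fun x hx y hy hxy ↦ absurd hxy (hD x hx y hy)
    exact ⟨K, u', hu.trans hu', hK⟩
  · rintro S D v w hv hDS hw hvw hD ⟨J, u, hu, hJ⟩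
    obtain ⟨J', hJ', hJ'v, hJ'w⟩ :=
      ((sameMarginals_of_smodEq_lowDegreeIdeal hu).symm.trans h).exists_mem_eq_of_adj hI hvw
    obtain ⟨K, u', hu', hK⟩ := exists_smodEq_cons_eqOn_insert hv hDS hJ hJ' hJ'v
      fun x hx y hy hxy ↦ by rw [hD x hx y hy hxy, hJ hw, hJ'w]
    exact ⟨K, u', hu.trans hu', hK⟩

lemma SameMarginals.smodEq_of_isAcyclic (hG : G.IsAcyclic) (h : SameMarginals G s t) :
    varProd ℂ s ≡ varProd ℂ t [SMOD lowDegreeIdeal G 2] := by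
  induction t using Multiset.induction generalizing s with
  | empty =>
    induction s using Multiset.induction with
    | empty => rfl
    | cons J s ih =>
      have := h.isEmpty_of_cons_zero
      have hJ : varProd ℂ {J} ≡ varProd ℂ 0 [SMOD lowDegreeIdeal G 2] :=
        SameMarginals.of_isEmpty.smodEq_lowDegreeIdeal (by simp) (by simp)
      simpa using hJ.mul (ih .of_isEmpty)
  | cons I t ih =>
    obtain ⟨u, hu⟩ := exists_smodEq_cons hG h (Multiset.mem_cons_self I t)
    have hut : SameMarginals G u t :=
      SameMarginals.cons_iff.1 ((sameMarginals_of_smodEq_lowDegreeIdeal hu).symm.trans h)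
    rw [varProd_cons] at hu ⊢
    exact hu.trans ((ih hut).smul (X I))

theorem genInDegLE_two_of_isAcyclic (hG : G.IsAcyclic) : GenInDegLE G 2 :=
  le_antisymm (ker_le_of_varProd_smodEq phi_X fun _ _ h ↦
    (bind_parameters_eq_iff.1 h).smodEq_of_isAcyclic hG) lowDegreeIdeal_le_toricIdeal

end Forests

section UniqueInFiber

variable {V : Type*} {G : SimpleGraph V} {I J : V → Bool} {s t : Multiset (V → Bool)}

/-- No other multiset of index strings has the marginals of `s`: the corresponding monomial is alone
in its fibre under `φ_G`. -/
def UniqueInFiber (G : SimpleGraph V) (s : Multiset (V → Bool)) : Prop :=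
  ∀ t, SameMarginals G s t → t = s

namespace UniqueInFiber

lemma mono (h : UniqueInFiber G t) (hst : s ≤ t) : UniqueInFiber G s := by
  obtain ⟨u, rfl⟩ := Multiset.le_iff_exists_add.1 hst
  exact fun s' hs' ↦ add_right_cancel (h (s' + u) (SameMarginals.add_right_iff.2 hs'))

lemma singleton [Nonempty V] (I : V → Bool) : UniqueInFiber G {I} := by
  intro t h
  obtain ⟨J, rfl⟩ : ∃ J, t = {J} := by
    have hcard := congrArg Multiset.card (h.vertex (Classical.arbitrary V))
    rw [Multiset.card_map, Multiset.card_map, Multiset.card_singleton] at hcard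
    exact Multiset.card_eq_one.1 hcard.symm
  exact congrArg _ (funext fun v ↦ by simpa [eq_comm] using h.vertex v)

lemma pair (hIJ : I ≠ J) (hconn : (G.induce {x | I x ≠ J x}).Preconnected) :
    UniqueInFiber G {I, J} := by
  intro t h
  obtain ⟨r, hr⟩ := Function.ne_iff.1 hIJ
  have : Nonempty V := ⟨r⟩
  have mem_pair {L : V → Bool} : L ∈ ({I, J} : Multiset (V → Bool)) ↔ L = I ∨ L = J := by simp
  obtain ⟨K, hK, hKr⟩ := h.symm.exists_mem_eq (mem_pair.2 (.inl rfl)) r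
  have agree_on (x : {x | I x ≠ J x}) : K x = I x := by
    induction (SimpleGraph.reachable_iff_reflTransGen _ x).1 (hconn ⟨r, hr⟩ x) with
    | refl => exact hKr
    | @tail y z _ hyz hy =>
      obtain ⟨L, hL, hLy, hLz⟩ := h.exists_mem_eq_of_adj hK (SimpleGraph.induce_adj.1 hyz)
      rcases mem_pair.1 hL with rfl | rfl
      · exact hLz.symm
      · exact absurd (hy.symm.trans hLy.symm) y.2
  obtain rfl : K = I := by
    funext x
    by_cases hx : I x = J x
    · obtain ⟨L, hL, hLx⟩ := h.exists_mem_eq hK x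
      rcases mem_pair.1 hL with rfl | rfl
      · exact hLx.symm
      · rw [← hLx, hx]
    · exact agree_on ⟨x, hx⟩
  obtain ⟨u, rfl⟩ := Multiset.exists_cons_of_mem hK
  exact congrArg _ (singleton J u (SameMarginals.cons_iff.1 h))

lemma of_card_le_two [Nonempty V] (hs : s.Nodup) (hcard : s.card ≤ 2)
    (hconn : ∀ I ∈ s, ∀ J ∈ s, I ≠ J → (G.induce {x | I x ≠ J x}).Preconnected) :
    UniqueInFiber G s := by
  interval_cases h : s.card
  · obtain rfl := Multiset.card_eq_zero.1 h
    exact (singleton fun _ ↦ false).mono (Multiset.zero_le _)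
  · obtain ⟨I, rfl⟩ := Multiset.card_eq_one.1 h
    exact singleton I
  · obtain ⟨I, J, rfl⟩ := Multiset.card_eq_two.1 h
    have hIJ : I ≠ J := by simpa using hs
    exact pair hIJ (hconn I (by simp) J (by simp) hIJ)

end UniqueInFiber

/-- A partial colouring `κ` of the vertices by three colours, each of them used, such that any two
colour classes together induce a connected subgraph. A cycle carries such a colouring, through which
the fibre structure of the triangle is pulled back to `G`. -/
structure TriangleModel (G : SimpleGraph V) (κ : V → Option (Fin 3)) : Prop where
  exists_eq_some (k : Fin 3) : ∃ x, κ x = some k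
  preconnected (k : Fin 3) : (G.induce {x | κ x ≠ none ∧ κ x ≠ some k}).Preconnected

/-- The patterns on three colours with parity `e`. The two parity classes have the same marginals
at every pair of colours. -/
def parityPatterns (e : Bool) : Finset (Fin 3 → Bool) :=
  {q | xor (q 0) (xor (q 1) (q 2)) = e}

lemma map_parityPatterns_false_eq_true (i j : Option (Fin 3)) :
    (parityPatterns false).val.map (fun q ↦ (i.elim false q, j.elim false q)) =
      (parityPatterns true).val.map fun q ↦ (i.elim false q, j.elim false q) := by
  decide +revert

lemma exists_forall_ne_iff_of_mem_parityPatterns {e : Bool} {q q' : Fin 3 → Bool}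
    (hq : q ∈ parityPatterns e) (hq' : q' ∈ parityPatterns e) (hne : q ≠ q') :
    ∃ k, ∀ i, q i ≠ q' i ↔ i ≠ k := by
  decide +revert

/-- The index strings that follow a pattern of parity `e` on the coloured vertices and vanish on
the uncoloured ones. -/
def parityTable (κ : V → Option (Fin 3)) (e : Bool) : Multiset (V → Bool) :=
  (parityPatterns e).val.map fun q x ↦ (κ x).elim false q

lemma sameMarginals_parityTable (κ : V → Option (Fin 3)) :
    SameMarginals G (parityTable κ false) (parityTable κ true) := by
  refine ⟨fun j k _ ↦ ?_, fun l _ ↦ ?_⟩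
  · simpa only [parityTable, Multiset.map_map, Function.comp_def]
      using map_parityPatterns_false_eq_true (κ j) (κ k)
  · simpa only [parityTable, Multiset.map_map, Function.comp_def]
      using congrArg (Multiset.map Prod.fst) (map_parityPatterns_false_eq_true (κ l) (κ l))

namespace TriangleModel

variable {κ : V → Option (Fin 3)}

lemma elim_injective (h : TriangleModel G κ) :
    Function.Injective fun (q : Fin 3 → Bool) x ↦ (κ x).elim false q := by
  intro q q' hqq'
  funext k
  obtain ⟨x, hx⟩ := h.exists_eq_some k
  simpa [hx] using congrFun hqq' x

lemma parityTable_ne (h : TriangleModel G κ) : parityTable κ false ≠ parityTable κ true := by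
  intro heq
  have := Multiset.map_injective h.elim_injective heq
  revert this
  decide

lemma preconnected_of_mem_parityTable (h : TriangleModel G κ) {e : Bool}
    (hI : I ∈ parityTable κ e) (hJ : J ∈ parityTable κ e) (hIJ : I ≠ J) :
    (G.induce {x | I x ≠ J x}).Preconnected := by
  obtain ⟨q, hq, rfl⟩ := Multiset.mem_map.1 hI
  obtain ⟨q', hq', rfl⟩ := Multiset.mem_map.1 hJ
  obtain ⟨k, hk⟩ := exists_forall_ne_iff_of_mem_parityPatterns hq hq'
    (by rintro rfl; exact hIJ rfl)
  have hdiff : {x | (κ x).elim false q ≠ (κ x).elim false q'} =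
      {x | κ x ≠ none ∧ κ x ≠ some k} := by
    ext x
    cases hx : κ x <;> simp [hx, ← hk]
  exact hdiff ▸ h.preconnected k

lemma uniqueInFiber (h : TriangleModel G κ) {e : Bool}
    (hs : s ≤ parityTable κ e) (hcard : s.card ≤ 2) : UniqueInFiber G s := by
  obtain ⟨x, -⟩ := h.exists_eq_some 0
  have : Nonempty V := ⟨x⟩
  have hnodup : (parityTable κ e).Nodup := (parityPatterns e).nodup.map h.elim_injective
  exact .of_card_le_two (Multiset.nodup_of_le hs hnodup) hcard fun I hI J hJ ↦
    h.preconnected_of_mem_parityTable (Multiset.mem_of_le hs hI) (Multiset.mem_of_le hs hJ)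

end TriangleModel

end UniqueInFiber

section DegreeBound

variable {V : Type} [Fintype V] {G : SimpleGraph V} {s t : Multiset (V → Bool)} {d : ℕ}

lemma not_genInDegLE (hs : ∀ u ≤ s, u.card ≤ d → UniqueInFiber G u) (hst : SameMarginals G s t)
    (hne : s ≠ t) : ¬ GenInDegLE G d := by
  classical
  intro hG
  have hmem : varProd ℂ s - varProd ℂ t ∈ lowDegreeIdeal G d :=
    hG.le (SModEq.sub_mem.1 (varProd_smodEq_toricIdeal_iff.2 hst))
  have hcoeff : coeff (Multiset.toFinsupp s) (varProd ℂ s - varProd ℂ t) = 0 := by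
    refine coeff_eq_zero_of_mem_span ?_ hmem _ le_rfl
    rintro f ⟨hf, hfd⟩ k hk
    by_cases hkd : (Finsupp.toMultiset k).card ≤ d
    · have hks : Finsupp.toMultiset k ≤ s := by
        simpa using Finsupp.toMultiset_strictMono.monotone hk
      exact coeff_eq_zero_of_mem_ker phi_X hf fun v hv ↦
        hs _ hks hkd v (bind_parameters_eq_iff.1 hv)
    · rw [not_le, Finsupp.card_toMultiset] at hkd
      exact coeff_eq_zero_of_totalDegree_lt (hfd.trans_lt hkd)
  rw [varProd_eq_monomial, varProd_eq_monomial, coeff_sub, coeff_monomial, coeff_monomial,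
    if_pos rfl, if_neg (Multiset.toFinsupp.injective.ne hne.symm), sub_zero] at hcoeff
  exact one_ne_zero hcoeff

lemma TriangleModel.not_genInDegLE_two {κ : V → Option (Fin 3)} (h : TriangleModel G κ) :
    ¬ GenInDegLE G 2 :=
  not_genInDegLE (fun _ ↦ h.uniqueInFiber) (sameMarginals_parityTable κ) h.parityTable_ne

end DegreeBound

section Cycles

variable {V : Type*} {G : SimpleGraph V} {u v : V}

lemma mem_support_tail_iff {p : G.Walk v u} (hp : p.IsPath) (hnil : ¬ p.Nil) {x : V} :
    x ∈ p.tail.support ↔ x ∈ p.support ∧ x ≠ v := by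
  have hv : v ∉ p.tail.support := by
    have := hp.support_nodup
    rw [← SimpleGraph.Walk.cons_support_tail hnil] at this
    exact (List.nodup_cons.1 this).1
  rw [← SimpleGraph.Walk.cons_support_tail hnil, List.mem_cons]
  exact ⟨fun hx ↦ ⟨.inr hx, ne_of_mem_of_not_mem hx hv⟩, fun hx ↦ hx.1.resolve_left hx.2⟩

lemma mem_support_dropLast_iff {p : G.Walk v u} (hp : p.IsPath) (hnil : ¬ p.Nil) {x : V} :
    x ∈ p.dropLast.support ↔ x ∈ p.support ∧ x ≠ u := by
  have hu : u ∉ p.dropLast.support := by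
    have := hp.support_nodup
    rw [← SimpleGraph.Walk.support_dropLast_concat hnil, List.nodup_append] at this
    exact fun h ↦ this.2.2 u h u (List.mem_singleton_self u) rfl
  rw [← SimpleGraph.Walk.support_dropLast_concat hnil, List.mem_append, List.mem_singleton]
  exact ⟨fun hx ↦ ⟨.inl hx, ne_of_mem_of_not_mem hx hu⟩, fun hx ↦ hx.1.resolve_right hx.2⟩

/-- The colouring of a path from `v` to `u`: `0` at `u`, `1` at `v` and `2` at the interior
vertices. If `u` and `v` are adjacent, this turns the cycle closing the path into a triangle. -/
noncomputable def pathColoring (p : G.Walk v u) (x : V) : Option (Fin 3) :=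
  open scoped Classical in
  if x = u then some 0 else if x = v then some 1 else if x ∈ p.support then some 2 else none

lemma triangleModel_pathColoring {p : G.Walk v u} (hp : p.IsPath) (huv : G.Adj u v)
    (hedge : s(u, v) ∉ p.edges) : TriangleModel G (pathColoring p) := by
  have hnil : ¬ p.Nil := SimpleGraph.Walk.not_nil_of_ne huv.ne'
  have hsnd : p.snd ≠ u := by
    intro h
    have := p.mk_start_snd_mem_edges hnil
    rw [h, Sym2.eq_swap] at this
    exact hedge this
  have outside_zero : {x | pathColoring p x ≠ none ∧ pathColoring p x ≠ some 0} =
      {x | x ∈ p.dropLast.support} := by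
    ext x
    simp only [pathColoring, Set.mem_ofPred_eq, mem_support_dropLast_iff hp hnil]
    grind [p.start_mem_support]
  have outside_one : {x | pathColoring p x ≠ none ∧ pathColoring p x ≠ some 1} =
      {x | x ∈ p.tail.support} := by
    ext x
    simp only [pathColoring, Set.mem_ofPred_eq, mem_support_tail_iff hp hnil]
    grind [p.end_mem_support, huv.ne]
  have outside_two : {x | pathColoring p x ≠ none ∧ pathColoring p x ≠ some 2} = {u, v} := by
    ext x
    simp only [pathColoring, Set.mem_ofPred_eq, Set.mem_insert_iff, Set.mem_singleton_iff]
    grind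
  constructor
  · intro k
    fin_cases k
    · exact ⟨u, by simp [pathColoring]⟩
    · exact ⟨v, by simp [pathColoring, huv.ne']⟩
    · exact ⟨p.snd, by simp [pathColoring, hsnd, (p.adj_snd hnil).ne',
        p.snd_mem_support_of_mem_edges (p.mk_start_snd_mem_edges hnil)]⟩
  · intro k
    fin_cases k
    · exact outside_zero ▸ p.dropLast.connected_induce_support.preconnected
    · exact outside_one ▸ p.tail.connected_induce_support.preconnected
    · exact outside_two ▸ (SimpleGraph.induce_pair_connected_of_adj huv).preconnected

lemma exists_triangleModel_of_not_isAcyclic (hG : ¬ G.IsAcyclic) : ∃ κ, TriangleModel G κ := by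
  simp only [SimpleGraph.IsAcyclic, not_forall, not_not] at hG
  obtain ⟨u, c, hc⟩ := hG
  cases c with
  | nil => exact absurd hc SimpleGraph.Walk.not_isCycle_nil
  | cons huv p =>
    obtain ⟨hp, hedge⟩ := SimpleGraph.Walk.cons_isCycle_iff p huv |>.1 hc
    exact ⟨_, triangleModel_pathColoring hp huv hedge⟩

end Cycles

/-- the toric ideal `I_G` is generated in degree `≤ 2` iff `G` is a forest. -/
theorem genInDegLE_two_iff_isAcyclic {V : Type} [Fintype V] [DecidableEq V]
    (G : SimpleGraph V) :
    GenInDegLE G 2 ↔ G.IsAcyclic := by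
  refine ⟨fun hgen ↦ ?_, genInDegLE_two_of_isAcyclic⟩
  by_contra hG
  obtain ⟨κ, hκ⟩ := exists_triangleModel_of_not_isAcyclic hG
  exact hκ.not_genInDegLE_two hgen

end BinaryGraphModels
end

section
/- For every m ≥ 3, the toric ideal I_{K_m} of the complete graph K_m on m vertices is not generated in degree ≤ 2m − 3; that is, the Markov width satisfies μ(K_m) ≥ 2m − 2. -/
open MvPolynomial Finset

namespace BinaryGraphModels

/-!
Generation in degree `≤ d` is obstructed by fibers. Let `u ≠ v` be tables with the same marginals
such that `u` shares no entry with any other table of its fiber. If `f ∈ I_G` has degree smaller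
than that of `u`, then no monomial of `f` divides `p^u`: a monomial `p^w` of `f` has to cancel
against some `p^{w'}` with the same image, and if `u = w + s` then `w' + s` is another table of the
fiber of `u`, so `s = 0` and `w = u` has too large a degree. The polynomials without a monomial
dividing `p^u` form an ideal, which does not contain `p^u - p^v`.

For the complete graph on `n ≥ 3` vertices take as `u` the sum of the `n` indicator strings of
single vertices and of `n - 2` copies of the string `1…1`, and as `v` its complement. Prescribing
these marginals says that exactly one entry of the table separates `i` from `k`, for every ordered
pair `(i, k)`. This forces every entry to be constant up to one vertex, and then leaves only the
two tables `u` and `v`, which have degree `2n - 2` and disjoint supports.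
-/

section MonomialMap

variable {σ τ R : Type*} [CommSemiring R] {A : σ → τ →₀ ℕ}

variable (R) in
/-- The monomial map of a toric ideal: the variable `X i` is sent to the monomial with exponent
vector `A i`, so that `Finsupp.weight A` is the induced map on exponent vectors. -/
noncomputable def monomialMap (A : σ → τ →₀ ℕ) : MvPolynomial σ R →ₐ[R] MvPolynomial τ R :=
  aeval fun i => monomial (A i) 1

lemma monomialMap_monomial (A : σ → τ →₀ ℕ) (w : σ →₀ ℕ) (c : R) :
    monomialMap R A (monomial w c) = monomial (Finsupp.weight A w) c := by
  simp only [monomialMap, aeval_monomial, monomial_pow, one_pow, Finsupp.prod, algebraMap_eq,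
    ← monomial_sum_one, C_mul_monomial, mul_one, Finsupp.weight_apply, Finsupp.sum]

lemma exists_ne_weight_eq_of_coeff_ne_zero {f : MvPolynomial σ R}
    (hf : monomialMap R A f = 0) {w : σ →₀ ℕ} (hw : coeff w f ≠ 0) :
    ∃ w', Finsupp.weight A w' = Finsupp.weight A w ∧ w' ≠ w := by
  classical
  by_contra! hunique
  refine hw ?_
  calc coeff w f
      = ∑ w' ∈ f.support,
          coeff (Finsupp.weight A w) (monomial (Finsupp.weight A w') (coeff w' f)) := by
        rw [Finset.sum_eq_single w]
        · rw [coeff_monomial, if_pos rfl]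
        · intro w' _ hne
          rw [coeff_monomial, if_neg (mt (hunique w') hne)]
        · intro hnot
          rw [notMem_support_iff.mp hnot, monomial_zero, coeff_zero]
    _ = coeff (Finsupp.weight A w) (monomialMap R A f) := by
        conv_rhs => rw [f.as_sum]
        simp only [map_sum, monomialMap_monomial, coeff_sum]
    _ = 0 := by rw [hf, coeff_zero]

/-- The exponent vector `u` is isolated in its fiber: it shares no variable with any other exponent
vector that `A` sends to the same weight. -/
def IsIsolated (A : σ → τ →₀ ℕ) (u : σ →₀ ℕ) : Prop :=
  ∀ v, Finsupp.weight A v = Finsupp.weight A u → v ≠ u → Disjoint v u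

lemma IsIsolated.coeff_eq_zero_of_le {u : σ →₀ ℕ} (hu : IsIsolated A u)
    {f : MvPolynomial σ R} (hf : monomialMap R A f = 0)
    (hdeg : f.totalDegree < u.degree) {w : σ →₀ ℕ} (hw : w ≤ u) : coeff w f = 0 := by
  by_contra hcoeff
  obtain ⟨w', hweight, hne⟩ := exists_ne_weight_eq_of_coeff_ne_zero hf hcoeff
  obtain ⟨s, rfl⟩ := exists_add_of_le hw
  have hdisj : Disjoint (w' + s) (w + s) :=
    hu _ (by rw [map_add, map_add, hweight]) (mt add_right_cancel hne)
  have hs : s = 0 := le_bot_iff.mp (hdisj le_add_self le_add_self)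
  have hle : w.degree ≤ f.totalDegree := le_totalDegree (mem_support_iff.mpr hcoeff)
  rw [hs, add_zero] at hdeg
  exact hdeg.not_ge hle

theorem IsIsolated.coeff_eq_zero_of_mem_span {u : σ →₀ ℕ} (hu : IsIsolated A u)
    {g : MvPolynomial σ R} (hg : g ∈ Ideal.span {f : MvPolynomial σ R |
      monomialMap R A f = 0 ∧ f.totalDegree < u.degree}) :
    coeff u g = 0 := by
  have hle : Ideal.span {f : MvPolynomial σ R |
      monomialMap R A f = 0 ∧ f.totalDegree < u.degree} ≤
      restrictSupportIdeal R (Set.Iic u)ᶜ (isLowerSet_Iic u).compl := by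
    rw [Ideal.span_le]
    rintro f ⟨hf, hdeg⟩ w hw hwu
    exact mem_support_iff.mp hw (hu.coeff_eq_zero_of_le hf hdeg hwu)
  by_contra hcoeff
  exact hle hg (mem_support_iff.mpr hcoeff) Set.self_mem_Iic

end MonomialMap

section Marginal

variable {V : Type*}

/-- The number of entries of the contingency table `z`, counted with multiplicity, that satisfy
`p`; for `p` of the form `fun I => I j = a ∧ I k = b` it is a two-way marginal of `z`. -/
noncomputable def marginal (p : (V → Bool) → Prop) [DecidablePred p] :
    ((V → Bool) →₀ ℕ) →+ ℕ :=
  Finsupp.weight fun I => if p I then 1 else 0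

lemma marginal_apply [Fintype V] [DecidableEq V] (p : (V → Bool) → Prop) [DecidablePred p]
    (z : (V → Bool) →₀ ℕ) : marginal p z = ∑ I, if p I then z I else 0 := by
  simp only [marginal, Finsupp.weight_eq_sum, smul_eq_mul, mul_ite, mul_one, mul_zero]

lemma marginal_single (p : (V → Bool) → Prop) [DecidablePred p] (I : V → Bool) (n : ℕ) :
    marginal p (Finsupp.single I n) = if p I then n else 0 := by
  simp only [marginal, Finsupp.weight_single, smul_eq_mul, mul_ite, mul_one, mul_zero]

end Marginal

section GraphModel

variable {V : Type} [Fintype V]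

/-- The exponent vector of the monomial `φ_G(p_I)`. -/
noncomputable def indexExponent (G : SimpleGraph V) (I : V → Bool) :
    Sym2 (V × Bool) ⊕ (V × Bool) →₀ ℕ :=
  letI : DecidableRel G.Adj := Classical.decRel _
  ∑ e ∈ G.edgeFinset, Finsupp.single (Sum.inl (Sym2.map (fun v => (v, I v)) e)) 1 +
    ∑ l with ∀ k, ¬ G.Adj l k, Finsupp.single (Sum.inr (l, I l)) 1

lemma phi_eq_monomialMap (G : SimpleGraph V) : phi G = monomialMap ℂ (indexExponent G) := by
  unfold phi monomialMap indexExponent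
  congr 1
  ext1 I
  rw [← one_mul (1 : ℂ), ← monomial_mul, monomial_sum_one, monomial_sum_one]
  rfl

lemma mem_toricIdeal_iff {G : SimpleGraph V} {f : MvPolynomial (V → Bool) ℂ} :
    f ∈ toricIdeal G ↔ monomialMap ℂ (indexExponent G) f = 0 := by
  rw [← phi_eq_monomialMap]
  rfl

lemma genInDegLE_markovWidth (G : SimpleGraph V) : GenInDegLE G (markovWidth G) := by
  refine Nat.sInf_mem (s := {d | GenInDegLE G d}) ?_
  obtain ⟨S, hS⟩ := IsNoetherian.noetherian (toricIdeal G)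
  refine ⟨S.sup totalDegree, le_antisymm ?_ (Ideal.span_le.mpr fun f hf => hf.1)⟩
  rw [← hS]
  exact Ideal.span_mono fun f hf => ⟨Ideal.subset_span hf, Finset.le_sup (f := totalDegree) hf⟩

open Classical in
lemma indexExponent_inl (G : SimpleGraph V) (I : V → Bool) (j k : V) (a b : Bool) :
    indexExponent G I (Sum.inl s((j, a), (k, b))) =
      if G.Adj j k ∧ I j = a ∧ I k = b then 1 else 0 := by
  have hmap (e : Sym2 V) : Sym2.map (fun v => (v, I v)) e = s((j, a), (k, b)) ↔
      e = s(j, k) ∧ I j = a ∧ I k = b := by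
    induction e using Sym2.ind with
    | _ x y =>
      simp only [Sym2.map_mk, Sym2.eq_iff, Prod.mk.injEq]
      grind
  by_cases h : I j = a ∧ I k = b <;>
    simp [indexExponent, Finsupp.single_apply, hmap, h]

open Classical in
lemma indexExponent_inr (G : SimpleGraph V) (I : V → Bool) (l : V) (a : Bool) :
    indexExponent G I (Sum.inr (l, a)) = if (∀ k, ¬ G.Adj l k) ∧ I l = a then 1 else 0 := by
  have hpair (v : V) : (v, I v) = (l, a) ↔ v = l ∧ I l = a := by
    rw [Prod.mk.injEq]
    exact and_congr_right fun h => by rw [h]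
  by_cases h : I l = a <;>
    simp [indexExponent, Finsupp.single_apply, hpair, h]

open Classical in
lemma weight_indexExponent_inl (G : SimpleGraph V) (j k : V) (a b : Bool)
    (z : (V → Bool) →₀ ℕ) :
    Finsupp.weight (indexExponent G) z (Sum.inl s((j, a), (k, b))) =
      if G.Adj j k then marginal (fun I => I j = a ∧ I k = b) z else 0 := by
  by_cases h : G.Adj j k <;>
    simp [Finsupp.weight_eq_sum, Finsupp.finsetSum_apply, indexExponent_inl, marginal_apply, h]

open Classical in
lemma weight_indexExponent_inr (G : SimpleGraph V) (l : V) (a : Bool) (z : (V → Bool) →₀ ℕ) :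
    Finsupp.weight (indexExponent G) z (Sum.inr (l, a)) =
      if ∀ k, ¬ G.Adj l k then marginal (fun I => I l = a) z else 0 := by
  by_cases h : ∀ k, ¬ G.Adj l k <;>
    simp [Finsupp.weight_eq_sum, Finsupp.finsetSum_apply, indexExponent_inr, marginal_apply, h]

variable [DecidableEq V]

lemma marginalsEq_iff_marginal {G : SimpleGraph V} {z w : (V → Bool) →₀ ℕ} :
    MarginalsEq G (fun I => z I) (fun I => w I) ↔
      (∀ j k, G.Adj j k → ∀ a b,
        marginal (fun I => I j = a ∧ I k = b) z = marginal (fun I => I j = a ∧ I k = b) w) ∧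
      ∀ l, (∀ k, ¬ G.Adj l k) → ∀ a,
        marginal (fun I => I l = a) z = marginal (fun I => I l = a) w := by
  simp only [MarginalsEq, marginal_apply]
  norm_cast

theorem weight_indexExponent_eq_iff_marginalsEq {G : SimpleGraph V} {z w : (V → Bool) →₀ ℕ} :
    Finsupp.weight (indexExponent G) z = Finsupp.weight (indexExponent G) w ↔
      MarginalsEq G (fun I => z I) (fun I => w I) := by
  rw [marginalsEq_iff_marginal]
  constructor
  · intro h
    constructor
    · intro j k hjk a b
      simpa [weight_indexExponent_inl, hjk] using
        DFunLike.congr_fun h (Sum.inl s((j, a), (k, b)))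
    · intro l hl a
      simpa [weight_indexExponent_inr, hl] using DFunLike.congr_fun h (Sum.inr (l, a))
  · rintro ⟨hedge, hvertex⟩
    ext q
    rcases q with e | ⟨l, a⟩
    · induction e using Sym2.ind with
      | _ x y =>
        obtain ⟨j, a⟩ := x
        obtain ⟨k, b⟩ := y
        rw [weight_indexExponent_inl, weight_indexExponent_inl]
        split_ifs with hjk
        · exact hedge j k hjk a b
        · rfl
    · rw [weight_indexExponent_inr, weight_indexExponent_inr]
      split_ifs with hl
      · exact hvertex l hl a
      · rfl

lemma monomial_sub_monomial_mem_toricIdeal {G : SimpleGraph V} {u v : (V → Bool) →₀ ℕ}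
    (h : MarginalsEq G (fun I => u I) (fun I => v I)) :
    monomial u 1 - monomial v 1 ∈ toricIdeal G := by
  rw [mem_toricIdeal_iff, map_sub, monomialMap_monomial, monomialMap_monomial,
    weight_indexExponent_eq_iff_marginalsEq.mpr h, sub_self]

theorem not_genInDegLE_of_isIsolated {G : SimpleGraph V} {u v : (V → Bool) →₀ ℕ}
    (huv : MarginalsEq G (fun I => u I) (fun I => v I)) (hne : v ≠ u)
    (hu : IsIsolated (indexExponent G) u) {d : ℕ} (hd : d < u.degree) : ¬ GenInDegLE G d := by
  intro hgen
  have hmem := monomial_sub_monomial_mem_toricIdeal huv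
  rw [hgen] at hmem
  have hcoeff : coeff u (monomial u 1 - monomial v 1 : MvPolynomial (V → Bool) ℂ) = 0 := by
    refine hu.coeff_eq_zero_of_mem_span (Ideal.span_mono ?_ hmem)
    rintro f ⟨hf, hdeg⟩
    exact ⟨mem_toricIdeal_iff.mp hf, hdeg.trans_lt hd⟩
  simp [coeff_monomial, hne] at hcoeff

end GraphModel

section StarMarginals

variable {V : Type*} [Fintype V]

/-- All two-way marginals of the contingency table `z` are `|V| - 2` on equal values and `1` on
distinct values; these are the marginals of the two tables `starTable V b` below. -/
def HasStarMarginals (z : (V → Bool) →₀ ℕ) : Prop :=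
  ∀ ⦃j k : V⦄, j ≠ k → ∀ a b, marginal (fun I => I j = a ∧ I k = b) z =
    if a = b then Fintype.card V - 2 else 1

namespace HasStarMarginals

variable {z : (V → Bool) →₀ ℕ} {b : Bool} {j k : V} {I J : V → Bool}

lemma degree_eq [Nontrivial V] (hz : HasStarMarginals z) : z.degree = 2 * Fintype.card V - 2 := by
  classical
  obtain ⟨j, k, hjk⟩ := exists_pair_ne V
  have hcells : z.degree = ∑ a, ∑ b, marginal (fun I => I j = a ∧ I k = b) z := by
    simp only [Finsupp.degree_eq_sum, marginal_apply, Fintype.sum_bool, ← Finset.sum_add_distrib]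
    refine Finset.sum_congr rfl fun I _ => ?_
    cases I j <;> cases I k <;> simp
  have hcard : 2 ≤ Fintype.card V := Fintype.one_lt_card
  simp only [hcells, hz hjk, Fintype.sum_bool, if_true, reduceCtorEq, if_false]
  omega

lemma eq_of_apply_ne_zero (hz : HasStarMarginals z) (hjk : j ≠ k) (hI : z I ≠ 0) (hJ : z J ≠ 0)
    (hIj : I j = b) (hIk : I k = !b) (hJj : J j = b) (hJk : J k = !b) : I = J := by
  classical
  by_contra hne
  have hle : ∑ K ∈ {I, J}, (if K j = b ∧ K k = !b then z K else 0) ≤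
      marginal (fun I => I j = b ∧ I k = !b) z := by
    rw [marginal_apply]
    exact Finset.sum_le_sum_of_subset (Finset.subset_univ _)
  rw [Finset.sum_pair hne, if_pos ⟨hIj, hIk⟩, if_pos ⟨hJj, hJk⟩, hz hjk, if_neg (by simp)] at hle
  omega

lemma exists_apply_ne_zero (hz : HasStarMarginals z) (hjk : j ≠ k) (b : Bool) :
    ∃ I, z I ≠ 0 ∧ I j = b ∧ I k = !b := by
  classical
  have hne : marginal (fun I => I j = b ∧ I k = !b) z ≠ 0 := by
    rw [hz hjk, if_neg (by simp)]
    exact one_ne_zero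
  rw [marginal_apply] at hne
  obtain ⟨I, -, hI⟩ := Finset.exists_ne_zero_of_sum_ne_zero hne
  by_cases hval : I j = b ∧ I k = !b
  · exact ⟨I, by simpa [hval] using hI, hval⟩
  · exact absurd (if_neg hval) hI

lemma not_two_true_two_false (hz : HasStarMarginals z) (hI : z I ≠ 0) :
    ¬ ∃ i j k l, i ≠ j ∧ k ≠ l ∧ I i = true ∧ I j = true ∧ I k = false ∧ I l = false := by
  rintro ⟨i, j, k, l, hij, hkl, hi, hj, hk, hl⟩
  -- `J` separates `i` from `j` and has to be `true` at `k`, while `K` separates `k` from `l` and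
  -- has to be `false` at `i` and `j`; so both of them separate `k` from `j`.
  obtain ⟨J, hJ, hJi, hJj⟩ := hz.exists_apply_ne_zero hij true
  obtain ⟨K, hK, hKk, hKl⟩ := hz.exists_apply_ne_zero hkl true
  have hne : ∀ {x y}, I x = true → I y = false → x ≠ y := by
    rintro x _ hx hy rfl
    simp [hx] at hy
  have hIJ : I ≠ J := by rintro rfl; simp [hj] at hJj
  have hIK : I ≠ K := by rintro rfl; simp [hk] at hKk
  have hJk : J k = true := by
    by_contra hJk
    exact hIJ (hz.eq_of_apply_ne_zero (hne hi hk) hI hJ hi hk hJi (by simpa using hJk))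
  have hKi : K i = false := by
    by_contra hKi
    exact hIK (hz.eq_of_apply_ne_zero (hne hi hl) hI hK hi hl (by simpa using hKi) hKl)
  have hKj : K j = false := by
    by_contra hKj
    exact hIK (hz.eq_of_apply_ne_zero (hne hj hl) hI hK hj hl (by simpa using hKj) hKl)
  have hJK : J = K := hz.eq_of_apply_ne_zero (hne hj hk).symm hJ hK hJk hJj hKk hKj
  simp [hJK, hKi] at hJi

end HasStarMarginals

end StarMarginals

section StarTable

variable {V : Type*} [DecidableEq V]

/-- The index string with value `b` at `i` and `!b` everywhere else. -/
def spike (b : Bool) (i : V) : V → Bool :=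
  Function.update (fun _ => !b) i b

lemma spike_apply (b : Bool) (i j : V) : spike b i j = if j = i then b else !b := by
  rw [spike, Function.update_apply]

lemma exists_eq_const_or_eq_spike (I : V → Bool) (h : ¬ ∃ i j k l, i ≠ j ∧ k ≠ l ∧
    I i = true ∧ I j = true ∧ I k = false ∧ I l = false) :
    ∃ b, I = (fun _ => b) ∨ ∃ i, I = spike b i := by
  by_contra! hne
  have hpair (b : Bool) : ∃ i j, i ≠ j ∧ I i = b ∧ I j = b := by
    obtain ⟨i, hi⟩ : ∃ i, I i = b := by
      by_contra! hI
      exact (hne !b).1 (funext fun x => Bool.eq_not.mpr (hI x))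
    obtain ⟨j, hji, hj⟩ : ∃ j, j ≠ i ∧ I j = b := by
      by_contra! hI
      refine (hne b).2 i (funext fun x => ?_)
      rw [spike_apply]
      split_ifs with hx
      · rw [hx, hi]
      · exact Bool.eq_not.mpr (hI x hx)
    exact ⟨i, j, hji.symm, hi, hj⟩
  obtain ⟨i, j, hij, hi, hj⟩ := hpair true
  obtain ⟨k, l, hkl, hk, hl⟩ := hpair false
  exact h ⟨i, j, k, l, hij, hkl, hi, hj, hk, hl⟩

lemma spike_apply_eq_iff {b : Bool} {i j : V} : spike b i j = b ↔ j = i := by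
  rw [spike_apply]
  split_ifs with h <;> simp [h]

lemma spike_apply_eq_not_iff {b : Bool} {i j : V} : spike b i j = !b ↔ j ≠ i := by
  rw [Bool.eq_not, Ne, spike_apply_eq_iff]

variable [Fintype V]

/-- The contingency table of degree `2|V| - 2` that contains each of the spikes `spike b i` once
and the constant string `b` with multiplicity `|V| - 2`. -/
noncomputable def starTable (V : Type*) [Fintype V] [DecidableEq V] (b : Bool) : (V → Bool) →₀ ℕ :=
  ∑ i, Finsupp.single (spike b i) 1 + Finsupp.single (fun _ => b) (Fintype.card V - 2)

lemma eq_const_or_eq_spike_of_starTable_apply_ne_zero {b : Bool} {I : V → Bool}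
    (hI : starTable V b I ≠ 0) : I = (fun _ => b) ∨ ∃ i, I = spike b i := by
  contrapose! hI
  simp [starTable, hI.1.symm, fun i => (hI.2 i).symm]

lemma card_filter_of_starTable_apply_ne_zero {b : Bool} {I : V → Bool}
    (hI : starTable V b I ≠ 0) : #{i | I i = b} = 1 ∨ #{i | I i = b} = Fintype.card V := by
  rcases eq_const_or_eq_spike_of_starTable_apply_ne_zero hI with rfl | ⟨i, rfl⟩
  · simp
  · refine Or.inl (Finset.card_eq_one.mpr ⟨i, ?_⟩)
    ext j
    simp only [spike_apply_eq_iff, Finset.mem_filter_univ, Finset.mem_singleton]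

lemma disjoint_starTable (hV : 3 ≤ Fintype.card V) (b : Bool) :
    Disjoint (starTable V b) (starTable V !b) := by
  rw [Finsupp.disjoint_iff, Finset.disjoint_left]
  intro I hI hI'
  have hcard := card_filter_of_starTable_apply_ne_zero (Finsupp.mem_support_iff.mp hI)
  have hcard' := card_filter_of_starTable_apply_ne_zero (Finsupp.mem_support_iff.mp hI')
  have hsum := Finset.card_filter_add_card_filter_not (s := univ) (fun i => I i = b)
  simp only [← Bool.eq_not, Finset.card_univ] at hsum
  omega

lemma hasStarMarginals_starTable (b : Bool) : HasStarMarginals (starTable V b) := by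
  intro j k hjk a c
  simp only [starTable, map_add, map_sum, marginal_single]
  rcases Bool.eq_or_eq_not a b with ha | ha <;> rcases Bool.eq_or_eq_not c b with hc | hc <;>
    simp only [ha, hc, spike_apply_eq_iff, spike_apply_eq_not_iff]
  · have hnone (i : V) : ¬ (j = i ∧ k = i) := fun h => hjk (h.1.trans h.2.symm)
    simp [hnone]
  · have hone (i : V) : (j = i ∧ k ≠ i) ↔ j = i := by grind
    simp [hone]
  · have hone (i : V) : (j ≠ i ∧ k = i) ↔ k = i := by grind
    simp [hone]
  · have hcompl : ({i | j ≠ i ∧ k ≠ i} : Finset V) = {j, k}ᶜ := by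
      ext i
      simp [eq_comm]
    have hcard : #{i | j ≠ i ∧ k ≠ i} = Fintype.card V - 2 := by
      rw [hcompl, Finset.card_compl, Finset.card_pair hjk]
    simp [hcard]

lemma starTable_apply_spike_ne_zero (b : Bool) (i : V) : starTable V b (spike b i) ≠ 0 := by
  have hle : Finsupp.single (spike b i) 1 ≤ starTable V b :=
    (Finset.single_le_sum_of_canonicallyOrdered
      (f := fun j => Finsupp.single (spike b j) 1) (Finset.mem_univ i)).trans le_self_add
  have hone : 1 ≤ starTable V b (spike b i) := by simpa using hle (spike b i)
  exact Nat.one_le_iff_ne_zero.mp hone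

lemma starTable_apply_spike_not (hV : 3 ≤ Fintype.card V) (b : Bool) (i : V) :
    starTable V b (spike (!b) i) = 0 := by
  by_contra hne
  exact Finset.disjoint_left.mp (Finsupp.disjoint_iff.mp (disjoint_starTable hV b))
    (Finsupp.mem_support_iff.mpr hne)
    (Finsupp.mem_support_iff.mpr (starTable_apply_spike_ne_zero _ i))

namespace HasStarMarginals

variable {z : (V → Bool) →₀ ℕ} {b : Bool} {i j k : V} {I : V → Bool}

lemma eq_const_or_eq_spike (hz : HasStarMarginals z) (hI : z I ≠ 0) :
    ∃ b, I = (fun _ => b) ∨ ∃ i, I = spike b i :=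
  exists_eq_const_or_eq_spike I (hz.not_two_true_two_false hI)

lemma eq_spike_or_eq_spike (hz : HasStarMarginals z) (hI : z I ≠ 0) (hi : I i = b)
    (hk : I k = !b) : I = spike b i ∨ I = spike (!b) k := by
  obtain ⟨c, rfl | ⟨l, rfl⟩⟩ := hz.eq_const_or_eq_spike hI
  · simp [hi] at hk
  · simp only [spike_apply] at hi hk
    grind

lemma apply_spike_add_apply_spike (hz : HasStarMarginals z) (hV : 3 ≤ Fintype.card V)
    (hik : i ≠ k) (b : Bool) : z (spike b i) + z (spike (!b) k) = 1 := by
  obtain ⟨l, hli, hlk⟩ := ENat.exists_ne_ne_of_three_le (by simpa using hV) i k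
  have hne : spike b i ≠ spike (!b) k := fun h => by
    simpa [spike_apply, hli, hlk] using congrFun h l
  have hsum : z (spike b i) + z (spike (!b) k) = marginal (fun I => I i = b ∧ I k = !b) z := by
    rw [marginal_apply, ← Finset.sum_subset (Finset.subset_univ {spike b i, spike (!b) k}),
      Finset.sum_pair hne]
    · simp [spike_apply, hik, hik.symm]
    · intro I _ hI
      by_contra hne
      obtain ⟨hi, hk, hzI⟩ : I i = b ∧ I k = (!b) ∧ z I ≠ 0 := by simpa using hne
      rcases hz.eq_spike_or_eq_spike hzI hi hk with rfl | rfl <;> simp at hI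
  rw [hsum, hz hik, if_neg (by simp)]

lemma exists_forall_apply_spike_eq_zero (hz : HasStarMarginals z) (hV : 3 ≤ Fintype.card V) :
    ∃ b, ∀ i, z (spike (!b) i) = 0 := by
  have hadd {i k : V} (hik : i ≠ k) : z (spike true i) + z (spike false k) = 1 :=
    hz.apply_spike_add_apply_spike hV hik true
  by_contra! h
  obtain ⟨i, hi⟩ : ∃ i, z (spike false i) ≠ 0 := h true
  obtain ⟨j, hj⟩ : ∃ j, z (spike true j) ≠ 0 := h false
  obtain rfl : j = i := by
    by_contra hne
    have := hadd hne
    omega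
  obtain ⟨k, hkj⟩ := Fintype.exists_ne_of_one_lt_card (by omega) j
  obtain ⟨l, hlj, hlk⟩ := ENat.exists_ne_ne_of_three_le (by simpa using hV) j k
  have hadd_kj := hadd hkj
  have hadd_jl := hadd hlj.symm
  have hadd_kl := hadd hlk.symm
  omega

lemma apply_spike_eq_one (hz : HasStarMarginals z) (hV : 3 ≤ Fintype.card V)
    (hb : ∀ i, z (spike (!b) i) = 0) (i : V) : z (spike b i) = 1 := by
  obtain ⟨k, hki⟩ := Fintype.exists_ne_of_one_lt_card (by omega) i
  simpa only [hb k, add_zero] using hz.apply_spike_add_apply_spike hV hki.symm b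

lemma apply_const_eq [Nontrivial V] (hz : HasStarMarginals z) (hb : ∀ i, z (spike (!b) i) = 0) :
    z (fun _ => b) = Fintype.card V - 2 := by
  obtain ⟨j, k, hjk⟩ := exists_pair_ne V
  have hmarginal := hz hjk b b
  rw [if_pos rfl, marginal_apply, Finset.sum_eq_single (fun _ => b)] at hmarginal
  · simpa using hmarginal
  · intro I _ hI
    by_contra hne
    obtain ⟨hj, hk, hzI⟩ : I j = b ∧ I k = b ∧ z I ≠ 0 := by simpa using hne
    obtain ⟨c, rfl | ⟨i, rfl⟩⟩ := hz.eq_const_or_eq_spike hzI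
    · exact hI (funext fun _ => hj)
    · rcases Bool.eq_or_eq_not c b with rfl | rfl
      · simp only [spike_apply] at hj hk
        grind
      · exact hzI (hb i)
  · simp

lemma starTable_le (hz : HasStarMarginals z) (hV : 3 ≤ Fintype.card V)
    (hb : ∀ i, z (spike (!b) i) = 0) : starTable V b ≤ z := by
  have : Nontrivial V := Fintype.one_lt_card_iff_nontrivial.mp (by omega)
  have hstar : HasStarMarginals (starTable V b) := hasStarMarginals_starTable b
  have hstar_zero := starTable_apply_spike_not hV b
  intro I
  by_cases hI : starTable V b I = 0
  · rw [hI]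
    exact Nat.zero_le _
  rcases eq_const_or_eq_spike_of_starTable_apply_ne_zero hI with rfl | ⟨i, rfl⟩
  · rw [hstar.apply_const_eq hstar_zero, hz.apply_const_eq hb]
  · rw [hstar.apply_spike_eq_one hV hstar_zero, hz.apply_spike_eq_one hV hb]

theorem exists_eq_starTable (hz : HasStarMarginals z) (hV : 3 ≤ Fintype.card V) :
    ∃ b, z = starTable V b := by
  have : Nontrivial V := Fintype.one_lt_card_iff_nontrivial.mp (by omega)
  obtain ⟨b, hb⟩ := hz.exists_forall_apply_spike_eq_zero hV
  obtain ⟨w, rfl⟩ := exists_add_of_le (hz.starTable_le hV hb)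
  have hw : w.degree = 0 := by
    have hdegree := hz.degree_eq
    rw [map_add, (hasStarMarginals_starTable b).degree_eq] at hdegree
    omega
  exact ⟨b, by rw [(Finsupp.degree_eq_zero_iff w).mp hw, add_zero]⟩

end HasStarMarginals

end StarTable

section CompleteGraph

variable {V : Type} [Fintype V]

lemma HasStarMarginals.marginalsEq_top_iff [DecidableEq V] [Nontrivial V] {z w : (V → Bool) →₀ ℕ}
    (hw : HasStarMarginals w) :
    MarginalsEq (⊤ : SimpleGraph V) (fun I => z I) (fun I => w I) ↔ HasStarMarginals z := by
  have hvertex (l : V) : ¬ ∀ k, ¬ (⊤ : SimpleGraph V).Adj l k := by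
    simpa [eq_comm] using exists_ne l
  rw [marginalsEq_iff_marginal]
  constructor
  · intro h j k hjk a b
    rw [h.1 j k hjk, hw hjk]
  · intro hz
    exact ⟨fun j k hjk a b => by rw [hz hjk, hw hjk], fun l hl => absurd hl (hvertex l)⟩

theorem not_genInDegLE_top_of_lt (hV : 3 ≤ Fintype.card V) {d : ℕ}
    (hd : d < 2 * Fintype.card V - 2) : ¬ GenInDegLE (⊤ : SimpleGraph V) d := by
  classical
  have : Nontrivial V := Fintype.one_lt_card_iff_nontrivial.mp (by omega)
  have hstar : HasStarMarginals (starTable V true) := hasStarMarginals_starTable true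
  have hdisj : Disjoint (starTable V false) (starTable V true) := disjoint_starTable hV false
  have hne : starTable V false ≠ starTable V true := by
    refine hdisj.ne fun h => ?_
    obtain ⟨i⟩ := ‹Nontrivial V›.to_nonempty
    exact starTable_apply_spike_ne_zero false i (DFunLike.congr_fun h _)
  have hisolated : IsIsolated (indexExponent ⊤) (starTable V true) := by
    intro w hw hwne
    have hwstar : HasStarMarginals w :=
      hstar.marginalsEq_top_iff.mp (weight_indexExponent_eq_iff_marginalsEq.mp hw)
    obtain ⟨b, rfl⟩ := hwstar.exists_eq_starTable hV
    cases b
    · exact hdisj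
    · exact absurd rfl hwne
  refine not_genInDegLE_of_isIsolated ?_ hne hisolated (hstar.degree_eq ▸ hd)
  exact (hasStarMarginals_starTable false).marginalsEq_top_iff.mpr hstar

theorem completeGraph_not_genInDegLE_general (V : Type) [Fintype V]
    (hV : 3 ≤ Fintype.card V) :
    ¬ GenInDegLE (⊤ : SimpleGraph V) (2 * Fintype.card V - 3) ∧
      2 * Fintype.card V - 2 ≤ markovWidth (⊤ : SimpleGraph V) := by
  refine ⟨not_genInDegLE_top_of_lt hV (by omega), ?_⟩
  by_contra! hlt
  exact not_genInDegLE_top_of_lt hV hlt (genInDegLE_markovWidth _)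

end CompleteGraph

/-- for `m ≥ 3`, the toric ideal of the complete graph `K_m` is not generated
in degree `≤ 2m - 3`; that is, the Markov width satisfies `μ(K_m) ≥ 2m - 2`. -/
theorem completeGraph_not_genInDegLE (m : ℕ) (hm : 3 ≤ m) :
    ¬ GenInDegLE (⊤ : SimpleGraph (Fin m)) (2 * m - 3) ∧
      2 * m - 2 ≤ markovWidth (⊤ : SimpleGraph (Fin m)) := by
  simpa only [Fintype.card_fin] using
    completeGraph_not_genInDegLE_general (Fin m) (by rwa [Fintype.card_fin])

end BinaryGraphModels
end

section
/- For every n ≥ 2, the toric ideal I_{K_{2,n}} of the complete bipartite graph K_{2,n} is generated in degree ≤ 4 (indeed generated by its homogeneous elements of total degrees 2 and 4), and is not generated in degree ≤ 3; consequently the Markov width satisfies μ(K_{2,n}) = 4. -/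
open MvPolynomial Finset

namespace BinaryGraphModels

/-!
A toric ideal is spanned by the binomials of pairs of monomials in one fibre of the monomial map, so
`I_G` is generated in given degrees as soon as moves of these degrees connect each fibre. For
`K_{2,n}` a fibre consists of the multisets of index strings with given marginals along the edges
`{v_i, w_j}`.

Multisets with the same counts of the star values `(I v₁, I v₂, I w_j)`, for all `j`, are connected
by quadrics, which swap the values at `w_j` of two strings agreeing at `v₁` and `v₂`. Hence it
suffices to decrease the distance of two multisets `m`, `m'` of one fibre, measured by their star
counts. If they differ in the counts of `(I v₁, I v₂)`, say at `(a, b)`, then the edge marginals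
propagate the defect around the square, and after swaps a quadric exchanging `v₂`-values
does it. If these counts agree, the difference at a leaf `w_j` is a multiple of the parity
function on the cube `{0,1}³`, and a quartic negating the value at `w_j` in four strings does it.

The quartic cannot be avoided: prescribing the marginals of four strings suitably forces their
values at one leaf `w_p` to form a Latin square of order two in `(I v₁, I v₂)`. There are two of
these, hence a two-element fibre with coprime monomials.
-/

section ToricMap

variable {R σ τ : Type*} [CommRing R]

/-- The monomial `∏_{s ∈ m} X s` with exponent given by a multiset of variables. -/
noncomputable def mon (m : Multiset σ) : MvPolynomial σ R := (m.map X).prod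

theorem mon_add (m m' : Multiset σ) : (mon (m + m') : MvPolynomial σ R) = mon m * mon m' := by
  simp only [mon, Multiset.map_add, Multiset.prod_add]

theorem mon_toMultiset (a : σ →₀ ℕ) : (mon a.toMultiset : MvPolynomial σ R) = monomial a 1 := by
  rw [mon, Finsupp.toMultiset_map, Finsupp.prod_toMultiset,
    Finsupp.prod_mapDomain_index pow_zero pow_add, monomial_eq, C_1, one_mul]

theorem mon_eq_monomial [DecidableEq σ] (m : Multiset σ) :
    (mon m : MvPolynomial σ R) = monomial m.toFinsupp 1 := by
  rw [← mon_toMultiset, Multiset.toFinsupp_toMultiset]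

theorem coeff_mon [DecidableEq σ] (m m' : Multiset σ) :
    coeff m'.toFinsupp (mon m : MvPolynomial σ R) = if m = m' then 1 else 0 := by
  rw [mon_eq_monomial, coeff_monomial]
  simp only [EmbeddingLike.apply_eq_iff_eq]

theorem monomial_eq_smul_mon (a : σ →₀ ℕ) (r : R) : monomial a r = r • mon a.toMultiset := by
  rw [mon_toMultiset, smul_monomial, smul_eq_mul, mul_one]

theorem isHomogeneous_mon (m : Multiset σ) :
    (mon m : MvPolynomial σ R).IsHomogeneous m.card := by
  classical
  rw [mon_eq_monomial]
  refine isHomogeneous_monomial 1 ?_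
  rw [← Multiset.toFinsupp_sum_eq]
  rfl

theorem mon_injective [Nontrivial R] :
    Function.Injective (mon : Multiset σ → MvPolynomial σ R) := by
  classical
  intro m m' h
  rw [mon_eq_monomial, mon_eq_monomial] at h
  exact Multiset.toFinsupp.injective (monomial_left_injective one_ne_zero h)

/-- The exponents `m`, `m'` with `mon m - mon m' ∈ J`, as an additive congruence. -/
def binomialCon (J : Ideal (MvPolynomial σ R)) : AddCon (Multiset σ) where
  r m m' := Ideal.Quotient.mk J (mon m) = Ideal.Quotient.mk J (mon m')
  iseqv := ⟨fun _ => rfl, Eq.symm, Eq.trans⟩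
  add' h h' := by rw [mon_add, mon_add, map_mul, map_mul, h, h']

theorem binomialCon_iff {J : Ideal (MvPolynomial σ R)} {m m' : Multiset σ} :
    binomialCon J m m' ↔ mon m - mon m' ∈ J :=
  Ideal.Quotient.mk_eq_mk_iff_sub_mem _ _

variable {e : σ → Multiset τ}

/-- The monomial map `X s ↦ mon (e s)`, whose kernel is the toric ideal of the exponents `e`. -/
noncomputable def toricMap (R : Type*) [CommRing R] (e : σ → Multiset τ) :
    MvPolynomial σ R →ₐ[R] MvPolynomial τ R :=
  aeval fun s => mon (e s)

/-- The partition of the exponents into the fibres of the monomial map `toricMap R e`. -/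
def fiberCon (e : σ → Multiset τ) : AddCon (Multiset σ) :=
  AddCon.ker (⟨⟨(Multiset.bind · e), Multiset.zero_bind e⟩, (Multiset.add_bind · · e)⟩ :
    Multiset σ →+ Multiset τ)

theorem fiberCon_iff {m m' : Multiset σ} : fiberCon e m m' ↔ m.bind e = m'.bind e := Iff.rfl

theorem toricMap_mon (m : Multiset σ) : toricMap R e (mon m) = mon (m.bind e) := by
  induction m using Multiset.induction_on with
  | empty => simp [mon]
  | cons s m ih =>
    rw [← Multiset.singleton_add, mon_add, map_mul, ih, Multiset.add_bind, mon_add,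
      Multiset.singleton_bind]
    simp [mon, toricMap]

theorem binomialCon_ker_toricMap [Nontrivial R] (e : σ → Multiset τ) :
    binomialCon (RingHom.ker (toricMap R e)) = fiberCon e := by
  ext m m'
  rw [binomialCon_iff, RingHom.mem_ker, map_sub, sub_eq_zero, toricMap_mon, toricMap_mon,
    mon_injective.eq_iff, fiberCon_iff]

/-- Choosing one exponent in each fibre gives a linear map `L` such that every `f` is congruent to
`L (toricMap R e f)` modulo the binomials of the fibres. -/
theorem ker_toricMap_le {J : Ideal (MvPolynomial σ R)} (hJ : fiberCon e ≤ binomialCon J) :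
    RingHom.ker (toricMap R e) ≤ J := by
  let choice : Multiset τ → Multiset σ := Function.invFun (Multiset.bind · e)
  let L : MvPolynomial τ R →ₗ[R] MvPolynomial σ R :=
    (basisMonomials τ R).constr R fun b => mon (choice b.toMultiset)
  have L_mon (q : Multiset τ) : L (mon q) = mon (choice q) := by
    classical
    have h := (basisMonomials τ R).constr_basis R
      (fun b => (mon (choice b.toMultiset) : MvPolynomial σ R)) q.toFinsupp
    simpa only [coe_basisMonomials, Multiset.toFinsupp_toMultiset, ← mon_eq_monomial] using h
  have sub_mem (f : MvPolynomial σ R) : f - L (toricMap R e f) ∈ J := by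
    induction f using MvPolynomial.induction_on' with
    | monomial a r =>
      rw [monomial_eq_smul_mon, map_smul, map_smul, ← smul_sub, toricMap_mon, L_mon]
      refine Submodule.smul_of_tower_mem J r (binomialCon_iff.1 (hJ ?_))
      exact (Function.invFun_eq (f := (Multiset.bind · e)) ⟨a.toMultiset, rfl⟩).symm
    | add f g hf hg => simpa only [map_add, add_sub_add_comm] using add_mem hf hg
  intro f hf
  simpa [(RingHom.mem_ker).1 hf] using sub_mem f

theorem coeff_eq_zero_of_fiber_singleton [DecidableEq σ] {m : Multiset σ}
    (hm : ∀ m', fiberCon e m' m → m' = m) {f : MvPolynomial σ R}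
    (hf : f ∈ RingHom.ker (toricMap R e)) : coeff m.toFinsupp f = 0 := by
  classical
  have coeff_image (g : MvPolynomial σ R) :
      coeff (m.bind e).toFinsupp (toricMap R e g) = coeff m.toFinsupp g := by
    induction g using MvPolynomial.induction_on' with
    | monomial a r =>
      have : a.toMultiset.bind e = m.bind e ↔ a.toMultiset = m := ⟨hm _, fun h => h ▸ rfl⟩
      simp only [monomial_eq_smul_mon, map_smul, toricMap_mon, coeff_smul, coeff_mon, this]
    | add g h hg hh => rw [map_add, coeff_add, coeff_add, hg, hh]
  rw [← coeff_image, RingHom.mem_ker.1 hf, coeff_zero]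

/-- A fibre consisting of two coprime monomials makes their difference indispensable: the
generators of smaller degree have no monomial dividing `mon m₁`. -/
theorem mon_sub_mon_notMem_span [Nontrivial R] {m₁ m₂ : Multiset σ} (hne : m₁ ≠ m₂)
    (hdisj : Disjoint m₁ m₂) (hfib : ∀ m, fiberCon e m m₁ → m = m₁ ∨ m = m₂) :
    mon m₁ - mon m₂ ∉ Ideal.span {f : MvPolynomial σ R |
      f ∈ RingHom.ker (toricMap R e) ∧ f.totalDegree < m₁.card} := by
  classical
  have hupper : IsUpperSet {a : σ →₀ ℕ | ¬ a.toMultiset ≤ m₁} := fun a b hab ha hb =>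
    ha ((Finsupp.toMultiset_strictMono.monotone hab).trans hb)
  have hspan : Ideal.span {f : MvPolynomial σ R |
      f ∈ RingHom.ker (toricMap R e) ∧ f.totalDegree < m₁.card} ≤
      restrictSupportIdeal R _ hupper := by
    refine Ideal.span_le.2 fun f ⟨hf, hdeg⟩ a ha hle => mem_support_iff.1 ha ?_
    obtain ⟨r, hr⟩ := Multiset.le_iff_exists_add.1 hle
    rcases eq_or_ne r 0 with rfl | hr0
    · refine coeff_eq_zero_of_totalDegree_lt (hdeg.trans_eq ?_)
      rw [hr, add_zero, Finsupp.card_toMultiset]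
      rfl
    · rw [← Finsupp.toMultiset_toFinsupp a]
      refine coeff_eq_zero_of_fiber_singleton (fun m hm => ?_) hf
      rcases hfib (m + r) (hr ▸ (fiberCon e).add hm ((fiberCon e).refl r)) with h | h
      · exact add_right_cancel (h.trans hr)
      · obtain ⟨s, hs⟩ := Multiset.exists_mem_of_ne_zero hr0
        exact absurd (h ▸ Multiset.mem_add.2 (.inr hs))
          (Multiset.disjoint_left.1 hdisj (hr ▸ Multiset.mem_add.2 (.inr hs)))
  intro hmem
  have hcoeff : coeff m₁.toFinsupp (mon m₁ - mon m₂ : MvPolynomial σ R) ≠ 0 := by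
    rw [coeff_sub, coeff_mon, coeff_mon, if_pos rfl, if_neg hne.symm, sub_zero]
    exact one_ne_zero
  exact hspan hmem (mem_support_iff.2 hcoeff) (Multiset.toFinsupp_toMultiset m₁).le

end ToricMap

section Multiset

theorem count_bind_val {α β : Type*} [DecidableEq β] (S : α → Finset β) (m : Multiset α) (b : β) :
    (m.bind fun x => (S x).val).count b = m.countP (b ∈ S ·) := by
  induction m using Multiset.induction_on with
  | empty => rfl
  | cons x m ih =>
    rw [Multiset.cons_bind, Multiset.count_add, ih, Multiset.countP_cons, add_comm,
      Multiset.count_eq_of_nodup (S x).nodup]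
    rfl

theorem count_map_eq_countP {α β : Type*} [DecidableEq β] (f : α → β) (m : Multiset α) (b : β) :
    (m.map f).count b = m.countP (f · = b) := by
  rw [Multiset.count_map, Multiset.countP_eq_card_filter]
  simp only [eq_comm]

/-- Equal counts over `b` turn a surplus over `s` into a deficit over `t`. -/
theorem mem_sub_of_fiber_eq_pair {α β γ : Type*} [DecidableEq γ] {f : α → β} {g : α → γ} (b : β)
    {s t : γ} {m m' : Multiset α} (hst : s ≠ t) (h : ∀ x, f x = b ↔ g x = s ∨ g x = t)
    (hmap : m.map f = m'.map f) (hs : s ∈ m.map g - m'.map g) : t ∈ m'.map g - m.map g := by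
  classical
  have count_eq_add (m : Multiset α) :
      (m.map f).count b = (m.map g).count s + (m.map g).count t := by
    simp only [count_map_eq_countP, h]
    induction m using Multiset.induction_on with
    | empty => rfl
    | cons x m ih => simp only [Multiset.countP_cons, ih]; grind
  have hcount := congrArg (Multiset.count b) hmap
  rw [count_eq_add, count_eq_add] at hcount
  rw [Multiset.mem_sub] at hs ⊢
  lia

theorem map_sub_map_le {α β : Type*} [DecidableEq α] [DecidableEq β] (f : α → β)
    (m m' : Multiset α) : m'.map f - m.map f ≤ (m' - m).map f := by
  rw [tsub_le_iff_left, ← Multiset.map_add]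
  exact Multiset.map_le_map le_add_tsub

theorem exists_mem_sub_of_card_eq {α : Type*} [DecidableEq α] {m m' : Multiset α}
    (hcard : m.card = m'.card) (hne : m ≠ m') : ∃ a, a ∈ m' - m := by
  refine Multiset.exists_mem_of_ne_zero fun h => hne ?_
  exact (Multiset.eq_of_le_of_card_le (tsub_eq_zero_iff_le.1 h) hcard.le).symm

theorem exists_add_of_le_map {α β : Type*} {f : α → β} {m : Multiset α} {t : Multiset β}
    (h : t ≤ m.map f) : ∃ p r, m = p + r ∧ p.map f = t := by
  classical
  induction t using Multiset.induction_on generalizing m with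
  | empty => exact ⟨0, m, by simp⟩
  | cons b t ih =>
    obtain ⟨u, hu⟩ := Multiset.le_iff_exists_add.1 h
    obtain ⟨x, hx, rfl, hxu⟩ := (Multiset.map_eq_cons f m (t + u) b).2
      (hu.trans (Multiset.cons_add b t u))
    obtain ⟨p, r, hm, rfl⟩ := ih (hxu ▸ Multiset.le_add_right t u)
    refine ⟨x ::ₘ p, r, ?_, Multiset.map_cons ..⟩
    rw [Multiset.cons_add, ← hm, Multiset.cons_erase hx]

/-- Removing a surplus `p` and adding a deficit `q` brings `p + r` closer to `m'`. -/
theorem sub_exchange {α : Type*} [DecidableEq α] {m' p q r : Multiset α}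
    (hp : p ≤ p + r - m') (hq : q ≤ m' - (p + r)) : m' - (q + r) = m' - (p + r) - q := by
  ext a
  have hpa := Multiset.count_le_of_le a hp
  have hqa := Multiset.count_le_of_le a hq
  simp only [Multiset.count_sub, Multiset.count_add] at hpa hqa ⊢
  lia

theorem exists_section_of_map_eq_univ {α β : Type*} [Fintype β] {f : α → β} {m : Multiset α}
    (h : m.map f = (univ : Finset β).val) :
    ∃ g : β → α, m = (univ : Finset β).val.map g ∧ ∀ b, f (g b) = b := by
  have hinj := Multiset.inj_on_of_nodup_map (h ▸ univ.nodup)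
  have hsurj (b : β) : ∃ x ∈ m, f x = b := Multiset.mem_map.1 (h ▸ mem_univ_val b)
  choose g hgm hg using hsurj
  refine ⟨g, ?_, hg⟩
  rw [← h, Multiset.map_map]
  exact (Multiset.map_id' m).symm.trans
    (Multiset.map_congr rfl fun x hx => hinj x hx _ (hgm _) (hg _).symm)

end Multiset

section GraphModel

variable {V : Type} [Fintype V] (G : SimpleGraph V)

open Classical in
/-- The variables occurring in the image of `p_I` under `φ_G`. -/
noncomputable def statistic (I : V → Bool) : Finset (Sym2 (V × Bool) ⊕ (V × Bool)) :=
  (G.edgeFinset.image (Sym2.map fun v => (v, I v))).disjSum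
    ((univ.filter fun l => ∀ k, ¬ G.Adj l k).image fun l => (l, I l))

theorem phi_eq_toricMap : phi G = toricMap ℂ fun I => (statistic G I).val := by
  classical
  refine algHom_ext fun I => ?_
  have hinj : Function.Injective fun v => (v, I v) := fun _ _ h => congrArg Prod.fst h
  rw [toricMap, aeval_X, mon, statistic, ← Finset.prod, prod_disjSum]
  simp only [phi, aeval_X]
  rw [prod_image (Sym2.map.injective hinj).injOn, prod_image hinj.injOn]

theorem toricIdeal_eq_ker :
    toricIdeal G = RingHom.ker (toricMap ℂ fun I => (statistic G I).val) := by
  rw [toricIdeal, phi_eq_toricMap]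
  rfl

/-- Two multisets of index strings have the same marginals; they encode contingency tables, so
this is the multiset form of `MarginalsEq`. -/
noncomputable def marginalCon : AddCon (Multiset (V → Bool)) :=
  fiberCon fun I => (statistic G I).val

variable {G}

theorem inl_mem_statistic {j k : V} {a b : Bool} {I : V → Bool} :
    Sum.inl s((j, a), (k, b)) ∈ statistic G I ↔ G.Adj j k ∧ (I j, I k) = (a, b) := by
  classical
  simp only [statistic, inl_mem_disjSum, mem_image]
  constructor
  · rintro ⟨z, hz, h⟩
    induction z with | _ x y =>
    simp only [SimpleGraph.mem_edgeFinset, SimpleGraph.mem_edgeSet, Sym2.map_mk, Sym2.eq_iff,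
      Prod.mk.injEq] at hz h
    rcases h with ⟨⟨rfl, rfl⟩, rfl, rfl⟩ | ⟨⟨rfl, rfl⟩, rfl, rfl⟩
    · exact ⟨hz, rfl⟩
    · exact ⟨hz.symm, rfl⟩
  · rintro ⟨h, hI⟩
    exact ⟨s(j, k), by simpa using h, by simp_all⟩

theorem inr_mem_statistic {l : V} {a : Bool} {I : V → Bool} :
    Sum.inr (l, a) ∈ statistic G I ↔ (∀ k, ¬ G.Adj l k) ∧ I l = a := by
  simp only [statistic, inr_mem_disjSum, mem_image, mem_filter_univ, Prod.mk.injEq]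
  grind

theorem marginalCon_iff {m m' : Multiset (V → Bool)} :
    marginalCon G m m' ↔
      (∀ j k, G.Adj j k → m.map (fun I => (I j, I k)) = m'.map fun I => (I j, I k)) ∧
      ∀ l, (∀ k, ¬ G.Adj l k) → m.map (fun I => I l) = m'.map fun I => I l := by
  classical
  simp only [marginalCon, fiberCon_iff, Multiset.ext (s := Multiset.bind _ _),
    Multiset.ext (s := Multiset.map _ _), count_bind_val, count_map_eq_countP, Sum.forall,
    Sym2.forall, Prod.forall, inl_mem_statistic, inr_mem_statistic]
  refine and_congr ⟨fun h j k hjk a b => by simpa [hjk] using h j a k b, fun h j a k b => ?_⟩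
    ⟨fun h l hl a => by simpa [hl] using h l a, fun h l a => ?_⟩
  · by_cases hjk : G.Adj j k
    · simpa [hjk] using h j k hjk a b
    · simp [hjk]
  · by_cases hl : ∀ k, ¬ G.Adj l k
    · simpa [hl] using h l hl a
    · simp [hl]

theorem card_eq_of_marginalCon [Nonempty V] {m m' : Multiset (V → Bool)} (h : marginalCon G m m') :
    m.card = m'.card := by
  obtain ⟨hedge, hisolated⟩ := marginalCon_iff.1 h
  obtain ⟨l⟩ := ‹Nonempty V›
  by_cases hl : ∀ k, ¬ G.Adj l k
  · simpa using congrArg Multiset.card (hisolated l hl)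
  · push Not at hl
    obtain ⟨k, hk⟩ := hl
    simpa using congrArg Multiset.card (hedge l k hk)

theorem GenInDegLE.mono {d d' : ℕ} (h : GenInDegLE G d) (hd : d ≤ d') : GenInDegLE G d' := by
  refine le_antisymm ?_ (Ideal.span_le.2 fun f hf => hf.1)
  conv_lhs => rw [h]
  exact Ideal.span_mono fun f hf => ⟨hf.1, hf.2.trans hd⟩

theorem markovWidth_eq_succ_iff {d : ℕ} :
    markovWidth G = d + 1 ↔ GenInDegLE G (d + 1) ∧ ¬ GenInDegLE G d :=
  Nat.sInf_upward_closed_eq_succ_iff (fun _ _ hd h => h.mono hd) d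

end GraphModel

section Exchange

variable {ι α β : Type*}

/-- The multisets of elements of `α` which agree under each of the maps `f i`. -/
def mapCon (f : ι → α → β) : AddCon (Multiset α) where
  r m m' := ∀ i, m.map (f i) = m'.map (f i)
  iseqv := ⟨fun _ _ => rfl, fun h i => (h i).symm, fun h h' i => (h i).trans (h' i)⟩
  add' h h' i := by rw [Multiset.map_add, Multiset.map_add, h, h']

theorem mapCon_iff {f : ι → α → β} {m m' : Multiset α} :
    mapCon f m m' ↔ ∀ i, m.map (f i) = m'.map (f i) := Iff.rfl

theorem card_eq_of_mapCon [Nonempty ι] {f : ι → α → β} {m m' : Multiset α}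
    (h : mapCon f m m') : m.card = m'.card := by
  obtain ⟨i⟩ := ‹Nonempty ι›
  simpa using congrArg Multiset.card (h i)

/-- `c` relates any two multisets of size `d` that are related by `p`: the moves of degree `d` of
the model `p` are available in `c`. -/
def ContainsMoves (p : AddCon (Multiset α)) (d : ℕ) (c : AddCon (Multiset α)) : Prop :=
  ∀ m m', p m m' → m.card = d → c m m'

end Exchange

section Star

variable {A B W : Type*}

/-- The values of an index string on `A` and at `j`. -/
def starValue (j : W) (I : A ⊕ W → B) : (A → B) × B := (I ∘ Sum.inl, I (Sum.inr j))

theorem swap_starCon [DecidableEq A] [DecidableEq W] (j : W) {y z : A ⊕ W → B}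
    (h : y ∘ Sum.inl = z ∘ Sum.inl) :
    mapCon starValue {y, z} {Function.update y (Sum.inr j) (z (Sum.inr j)),
      Function.update z (Sum.inr j) (y (Sum.inr j))} := by
  intro k
  rcases eq_or_ne k j with rfl | hk
  · simpa [starValue, Function.update_comp_eq_of_forall_ne, h] using Multiset.pair_comm _ _
  · simp [starValue, Function.update_comp_eq_of_forall_ne, h, hk]

variable {c : AddCon (Multiset (A ⊕ W → B))}

theorem exists_update_cons [DecidableEq A] [DecidableEq W]
    (hc : ContainsMoves (mapCon starValue) 2 c) {m r : Multiset (A ⊕ W → B)} {x y : A ⊕ W → B}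
    {j : W} (hm : (c ⊓ mapCon starValue) m (y ::ₘ r)) (hxy : y ∘ Sum.inl = x ∘ Sum.inl)
    (hx : starValue j x ∈ m.map (starValue j)) :
    ∃ r', (c ⊓ mapCon starValue) m (Function.update y (Sum.inr j) (x (Sum.inr j)) ::ₘ r') := by
  obtain ⟨z, hz, hzx⟩ := Multiset.mem_map.1 (hm.2 j ▸ hx)
  obtain ⟨hztop, hzj⟩ := Prod.ext_iff.1 hzx
  rw [← show z (Sum.inr j) = x (Sum.inr j) from hzj]
  rcases Multiset.mem_cons.1 hz with rfl | hzr
  · exact ⟨r, by rwa [Function.update_eq_self]⟩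
  · obtain ⟨r, rfl⟩ := Multiset.exists_cons_of_mem hzr
    have hswap := swap_starCon j (hxy.trans hztop.symm)
    have hstep := AddCon.add (c ⊓ mapCon starValue) ⟨hc _ _ hswap rfl, hswap⟩ (AddCon.refl _ r)
    simp only [Multiset.insert_eq_cons, Multiset.cons_add, Multiset.singleton_add] at hstep
    exact ⟨_, AddCon.trans _ hm hstep⟩

variable [Finite W] [Nonempty W]

theorem exists_cons_of_starValue_mem (hc : ContainsMoves (mapCon starValue) 2 c)
    {m : Multiset (A ⊕ W → B)} {x : A ⊕ W → B}
    (hx : ∀ j, starValue j x ∈ m.map (starValue j)) :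
    ∃ r, (c ⊓ mapCon starValue) m (x ::ₘ r) := by
  classical
  cases nonempty_fintype W
  suffices agree : ∀ s : Finset W, ∃ y r, (c ⊓ mapCon starValue) m (y ::ₘ r) ∧
      y ∘ Sum.inl = x ∘ Sum.inl ∧ ∀ j ∈ s, y (Sum.inr j) = x (Sum.inr j) by
    obtain ⟨y, r, hm, htop, hyx⟩ := agree univ
    obtain rfl : y = x := funext (Sum.forall.2 ⟨congrFun htop, fun j => hyx j (mem_univ j)⟩)
    exact ⟨r, hm⟩
  intro s
  induction s using Finset.induction_on with
  | empty =>
    obtain ⟨j⟩ := ‹Nonempty W›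
    obtain ⟨z, hz, hzx⟩ := Multiset.mem_map.1 (hx j)
    refine ⟨z, m.erase z, ?_, congrArg Prod.fst hzx, by simp⟩
    rw [Multiset.cons_erase hz]
    exact AddCon.refl _ _
  | insert j s _ ih =>
    obtain ⟨y, r, hm, htop, hyx⟩ := ih
    obtain ⟨r', hr'⟩ := exists_update_cons hc hm htop (hx j)
    refine ⟨_, r', hr', ?_, fun k hk => ?_⟩
    · rwa [Function.update_comp_eq_of_forall_ne _ _ (by simp)]
    · rcases eq_or_ne k j with rfl | hkj
      · simp
      · simpa [hkj] using hyx k (by simpa [hkj] using hk)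

theorem exists_add_of_starValue_le (hc : ContainsMoves (mapCon starValue) 2 c)
    {m p : Multiset (A ⊕ W → B)} (hp : ∀ j, p.map (starValue j) ≤ m.map (starValue j)) :
    ∃ r, (c ⊓ mapCon starValue) m (p + r) := by
  induction p using Multiset.induction_on generalizing m with
  | empty => exact ⟨m, by rw [zero_add]; exact AddCon.refl _ _⟩
  | cons x p ih =>
    obtain ⟨r, hr⟩ := exists_cons_of_starValue_mem hc
      fun j => Multiset.mem_of_le (hp j) (Multiset.mem_map_of_mem _ (Multiset.mem_cons_self x p))
    obtain ⟨r', hr'⟩ := ih (m := r) fun j => by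
      simpa [hr.2 j] using hp j
    refine ⟨r', AddCon.trans _ hr ?_⟩
    rw [Multiset.cons_add]
    exact AddCon.add _ (AddCon.refl _ {x}) hr'

theorem starCon_le (hc : ContainsMoves (mapCon starValue) 2 c) : mapCon starValue ≤ c := by
  intro m m' h
  obtain ⟨r, hcr, hstar⟩ := exists_add_of_starValue_le hc fun j => (h j).ge
  have hcard := (card_eq_of_mapCon h).symm.trans (card_eq_of_mapCon hstar)
  obtain rfl : r = 0 := by simpa using hcard
  rwa [add_zero] at hcr

end Star

section Edge

variable {A B W : Type*}

/-- The values of an index string at the ends of the edge `p` of the complete bipartite graph. -/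
def edgeValue (p : A × W) (I : A ⊕ W → B) : B × B := (I (Sum.inl p.1), I (Sum.inr p.2))

theorem map_edgeValue (i : A) (j : W) (m : Multiset (A ⊕ W → B)) :
    m.map (edgeValue (i, j)) = (m.map (starValue j)).map fun x => (x.1 i, x.2) := by
  rw [Multiset.map_map]
  rfl

theorem starCon_le_edgeCon :
    (mapCon starValue : AddCon (Multiset (A ⊕ W → B))) ≤ mapCon edgeValue := fun m m' h p => by
  rw [map_edgeValue, map_edgeValue, h]

theorem marginalCon_completeBipartiteGraph {A W : Type} [Fintype A] [Fintype W] [Nonempty A]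
    [Nonempty W] : marginalCon (completeBipartiteGraph A W) = mapCon edgeValue := by
  ext m m'
  rw [marginalCon_iff, mapCon_iff]
  refine ⟨fun h p => h.1 (Sum.inl p.1) (Sum.inr p.2) (by simp), fun h => ⟨?_, ?_⟩⟩
  · rintro (i | j) (i' | j') hadj
    · simp at hadj
    · exact h (i, j')
    · simpa [edgeValue, Function.comp_def] using congrArg (Multiset.map Prod.swap) (h (i', j))
    · simp at hadj
  · rintro (i | j) hisolated
    · obtain ⟨j⟩ := ‹Nonempty W›
      exact absurd (by simp) (hisolated (Sum.inr j))
    · obtain ⟨i⟩ := ‹Nonempty A›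
      exact absurd (by simp) (hisolated (Sum.inl i))

end Edge

section Distance

variable {A B W : Type*} [Fintype A] [DecidableEq B]

/-- The values at `j` which occur more often in `m` than in `m'`, with the excess as
multiplicity. -/
def starSurplus (j : W) (m m' : Multiset (A ⊕ W → B)) : Multiset ((A → B) × B) :=
  m.map (starValue j) - m'.map (starValue j)

/-- The distance of `m` from `m'`, measured by the star values which `m` is lacking. -/
def starDist [Fintype W] (m m' : Multiset (A ⊕ W → B)) : ℕ := ∑ j, (starSurplus j m' m).card

theorem starDist_lt_of_move [Fintype W] {m m' p q r : Multiset (A ⊕ W → B)}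
    (hm : mapCon starValue m (p + r)) (hq : q ≠ 0)
    (hmove : ∀ j, p.map (starValue j) = q.map (starValue j) ∨
      p.map (starValue j) ≤ starSurplus j m m' ∧ q.map (starValue j) ≤ starSurplus j m' m)
    (hsome : ∃ j, p.map (starValue j) ≤ starSurplus j m m' ∧
      q.map (starValue j) ≤ starSurplus j m' m) :
    starDist (q + r) m' < starDist m m' := by
  have sub_eq {j : W} (hp : p.map (starValue j) ≤ starSurplus j m m')
      (hq : q.map (starValue j) ≤ starSurplus j m' m) :
      starSurplus j m' (q + r) = starSurplus j m' m - q.map (starValue j) := by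
    rw [starSurplus, hm j, Multiset.map_add] at hp hq
    rw [starSurplus, starSurplus, hm j, Multiset.map_add, Multiset.map_add, sub_exchange hp hq]
  refine sum_lt_sum (fun j _ => ?_) ?_
  · rcases hmove j with h | ⟨h, h'⟩
    · rw [starSurplus, starSurplus, hm j, Multiset.map_add, Multiset.map_add, h]
    · rw [sub_eq h h']
      exact Multiset.card_le_card tsub_le_self
  · obtain ⟨j, h, h'⟩ := hsome
    refine ⟨j, mem_univ j, ?_⟩
    rw [sub_eq h h', Multiset.card_sub h', Multiset.card_map]
    have hle := Multiset.card_le_card h'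
    rw [Multiset.card_map] at hle
    have := Multiset.card_pos.2 hq
    lia

theorem exists_closer_of_move [Fintype W] {c : AddCon (Multiset (A ⊕ W → B))}
    {m m' p q r : Multiset (A ⊕ W → B)} (hmm' : mapCon edgeValue m m') (hpq : mapCon edgeValue p q)
    (hc : c p q) (hm : (c ⊓ mapCon starValue) m (p + r)) (hq : q ≠ 0)
    (hmove : ∀ j, p.map (starValue j) = q.map (starValue j) ∨
      p.map (starValue j) ≤ starSurplus j m m' ∧ q.map (starValue j) ≤ starSurplus j m' m)
    (hsome : ∃ j, p.map (starValue j) ≤ starSurplus j m m' ∧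
      q.map (starValue j) ≤ starSurplus j m' m) :
    ∃ m₁, c m m₁ ∧ mapCon edgeValue m₁ m' ∧ starDist m₁ m' < starDist m m' :=
  ⟨q + r, c.trans hm.1 (c.add hc (c.refl r)),
    AddCon.trans _ (AddCon.symm _
      (AddCon.trans _ (starCon_le_edgeCon hm.2) (AddCon.add _ hpq (AddCon.refl _ r)))) hmm',
    starDist_lt_of_move hm.2 hq hmove hsome⟩

end Distance

section TwoByMany

variable {A W : Type*} {m m' : Multiset (Fin 2 ⊕ W → Bool)} {j : W} {a b c : Bool}

theorem comp_inl_eq_iff {I : Fin 2 ⊕ W → Bool} :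
    I ∘ Sum.inl = ![a, b] ↔ I (Sum.inl 0) = a ∧ I (Sum.inl 1) = b := by
  simp [funext_iff, Fin.forall_fin_two]

theorem mem_starSurplus_flip_snd (h : mapCon edgeValue m m')
    (hmem : (![a, b], c) ∈ starSurplus j m m') : (![a, !b], c) ∈ starSurplus j m' m := by
  refine mem_sub_of_fiber_eq_pair (a, c) (by simp) (fun I => ?_) (h (0, j)) hmem
  simp only [edgeValue, starValue, Prod.mk.injEq, comp_inl_eq_iff, Bool.eq_not]
  tauto

theorem mem_starSurplus_flip_fst (h : mapCon edgeValue m m')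
    (hmem : (![a, b], c) ∈ starSurplus j m m') : (![!a, b], c) ∈ starSurplus j m' m := by
  refine mem_sub_of_fiber_eq_pair (b, c) (by simp) (fun I => ?_) (h (1, j)) hmem
  simp only [edgeValue, starValue, Prod.mk.injEq, comp_inl_eq_iff, Bool.eq_not]
  tauto

theorem mem_starSurplus_flip_leaf {u : Fin 2 → Bool}
    (htop : m.map (· ∘ Sum.inl) = m'.map (· ∘ Sum.inl))
    (hmem : (u, c) ∈ starSurplus j m m') : (u, !c) ∈ starSurplus j m' m := by
  refine mem_sub_of_fiber_eq_pair u (by simp) (fun I => ?_) htop hmem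
  simp only [starValue, Prod.mk.injEq, Bool.eq_not]
  tauto

theorem exchange_edgeCon (a b : Bool) (ε : W → Bool) :
    mapCon edgeValue {Sum.elim ![a, !b] ε, Sum.elim ![!a, b] ε}
      {Sum.elim ![a, b] ε, Sum.elim ![!a, !b] ε} := by
  rintro ⟨i, j⟩
  fin_cases i
  · rfl
  · exact Multiset.pair_comm (!b, ε j) (b, ε j)

/-- The four star values at one leaf which are affected by a quartic move; the move itself
negates the last argument `c`. -/
def quarticValues (a b c : Bool) : Multiset ((Fin 2 → Bool) × Bool) :=
  {(![a, b], c), (![!a, !b], c), (![a, !b], !c), (![!a, b], !c)}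

theorem map_quarticValues (i : Fin 2) (a b c : Bool) :
    (quarticValues a b c).map (fun x => (x.1 i, x.2)) =
      (quarticValues a b !c).map fun x => (x.1 i, x.2) := by
  decide +revert

theorem quarticValues_le_starSurplus (h : mapCon edgeValue m m')
    (htop : m.map (· ∘ Sum.inl) = m'.map (· ∘ Sum.inl))
    (hmem : (![a, b], c) ∈ starSurplus j m m') : quarticValues a b c ≤ starSurplus j m m' := by
  have h' := AddCon.symm _ h
  have hfst := mem_starSurplus_flip_fst h hmem
  have hsnd := mem_starSurplus_flip_snd h hmem
  rw [quarticValues, Multiset.le_iff_subset (by simp)]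
  simpa [Multiset.subset_iff] using ⟨hmem, mem_starSurplus_flip_snd h' hfst,
    mem_starSurplus_flip_leaf htop.symm hsnd, mem_starSurplus_flip_leaf htop.symm hfst⟩

/-- The index string which differs from `I` exactly at `j`. -/
def flipLeaf [DecidableEq W] (j : W) (I : A ⊕ W → Bool) : A ⊕ W → Bool :=
  Sum.elim (I ∘ Sum.inl) (Function.update (I ∘ Sum.inr) j !I (Sum.inr j))

theorem map_starValue_flipLeaf_self [DecidableEq W] (j : W) (m : Multiset (A ⊕ W → Bool)) :
    (m.map (flipLeaf j)).map (starValue j) = (m.map (starValue j)).map fun x => (x.1, !x.2) := by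
  simp [Multiset.map_map, Function.comp_def, starValue, flipLeaf]

theorem map_starValue_flipLeaf_of_ne [DecidableEq W] {j k : W} (hk : k ≠ j)
    (m : Multiset (A ⊕ W → Bool)) :
    (m.map (flipLeaf j)).map (starValue k) = m.map (starValue k) := by
  rw [Multiset.map_map]
  exact Multiset.map_congr rfl fun I _ => by simp [starValue, flipLeaf, hk]

theorem flipLeaf_edgeCon [DecidableEq W] (h : m.map (starValue j) = quarticValues a b c) :
    mapCon edgeValue m (m.map (flipLeaf j)) := by
  rintro ⟨i, k⟩
  rw [map_edgeValue, map_edgeValue]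
  rcases eq_or_ne k j with rfl | hk
  · rw [map_starValue_flipLeaf_self, h, map_quarticValues, quarticValues]
    simp [quarticValues]
  · rw [map_starValue_flipLeaf_of_ne hk]

variable {γ : AddCon (Multiset (Fin 2 ⊕ W → Bool))}

theorem exists_closer_of_top_ne [Fintype W] [Nonempty W] (h₂ : ContainsMoves (mapCon edgeValue) 2 γ)
    (h : mapCon edgeValue m m') (htop : m.map (· ∘ Sum.inl) ≠ m'.map (· ∘ Sum.inl)) :
    ∃ m₁, γ m m₁ ∧ mapCon edgeValue m₁ m' ∧ starDist m₁ m' < starDist m m' := by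
  have h' := AddCon.symm _ h
  obtain ⟨u, hu⟩ := exists_mem_sub_of_card_eq (by simpa using card_eq_of_mapCon h) htop
  obtain ⟨a, b, rfl⟩ : ∃ a b, u = ![a, b] := ⟨u 0, u 1, (FinVec.etaExpand_eq u).symm⟩
  have lacking (j : W) : ∃ c, (![a, b], c) ∈ starSurplus j m' m := by
    have hle := map_sub_map_le Prod.fst (m.map (starValue j)) (m'.map (starValue j))
    rw [Multiset.map_map, Multiset.map_map] at hle
    obtain ⟨⟨_, c⟩, hc, rfl⟩ := Multiset.mem_map.1 (Multiset.mem_of_le hle hu)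
    exact ⟨c, hc⟩
  choose ε hε using lacking
  have hsnd (j : W) := mem_starSurplus_flip_snd h' (hε j)
  let p : Multiset (Fin 2 ⊕ W → Bool) := {Sum.elim ![a, !b] ε, Sum.elim ![!a, b] ε}
  let q : Multiset (Fin 2 ⊕ W → Bool) := {Sum.elim ![a, b] ε, Sum.elim ![!a, !b] ε}
  have hp (j : W) : p.map (starValue j) ≤ starSurplus j m m' := by
    change {(![a, !b], ε j), (![!a, b], ε j)} ≤ _
    rw [Multiset.le_iff_subset (by simp)]
    simpa [Multiset.subset_iff] using ⟨hsnd j, mem_starSurplus_flip_fst h' (hε j)⟩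
  have hq (j : W) : q.map (starValue j) ≤ starSurplus j m' m := by
    change {(![a, b], ε j), (![!a, !b], ε j)} ≤ _
    rw [Multiset.le_iff_subset (by simp)]
    simpa [Multiset.subset_iff] using ⟨hε j, mem_starSurplus_flip_fst h (hsnd j)⟩
  obtain ⟨r, hr⟩ := exists_add_of_starValue_le (c := γ)
    (fun m₁ m₂ hm => h₂ m₁ m₂ (starCon_le_edgeCon hm)) fun j => (hp j).trans tsub_le_self
  have hpq : mapCon edgeValue p q := exchange_edgeCon a b ε
  obtain ⟨j⟩ := ‹Nonempty W›
  exact exists_closer_of_move h hpq (h₂ _ _ hpq rfl) hr Multiset.cons_ne_zero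
    (fun j => .inr ⟨hp j, hq j⟩) ⟨j, hp j, hq j⟩

theorem exists_closer_of_top_eq [Fintype W] (h₄ : ContainsMoves (mapCon edgeValue) 4 γ)
    (h : mapCon edgeValue m m') (htop : m.map (· ∘ Sum.inl) = m'.map (· ∘ Sum.inl))
    (hne : m.map (starValue j) ≠ m'.map (starValue j)) :
    ∃ m₁, γ m m₁ ∧ mapCon edgeValue m₁ m' ∧ starDist m₁ m' < starDist m m' := by
  classical
  have h' := AddCon.symm _ h
  have hcard : m.card = m'.card := by simpa using congrArg Multiset.card htop
  obtain ⟨⟨u, c⟩, hu⟩ := exists_mem_sub_of_card_eq (by simpa using hcard) hne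
  obtain ⟨a, b, rfl⟩ : ∃ a b, u = ![a, b] := ⟨u 0, u 1, (FinVec.etaExpand_eq u).symm⟩
  have hp := quarticValues_le_starSurplus h htop (mem_starSurplus_flip_leaf htop.symm hu)
  have hq := quarticValues_le_starSurplus h' htop.symm hu
  obtain ⟨p, r, rfl, hp_map⟩ := exists_add_of_le_map (hp.trans tsub_le_self)
  have hq_map : (p.map (flipLeaf j)).map (starValue j) = quarticValues a b c := by
    rw [map_starValue_flipLeaf_self, hp_map]
    simp [quarticValues]
  have hpq := flipLeaf_edgeCon hp_map
  have hp_card : p.card = 4 := by simpa [quarticValues] using congrArg Multiset.card hp_map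
  rw [← hp_map] at hp
  rw [← hq_map] at hq
  refine exists_closer_of_move h hpq (h₄ _ _ hpq hp_card) (AddCon.refl _ _) ?_ (fun k => ?_)
    ⟨j, hp, hq⟩
  · rintro hq_zero
    simp [Multiset.map_eq_zero.1 hq_zero] at hp_card
  · rcases eq_or_ne k j with rfl | hk
    · exact .inr ⟨hp, hq⟩
    · exact .inl (map_starValue_flipLeaf_of_ne hk p).symm

theorem edgeCon_le [Finite W] [Nonempty W] (h₂ : ContainsMoves (mapCon edgeValue) 2 γ)
    (h₄ : ContainsMoves (mapCon edgeValue) 4 γ) : mapCon edgeValue ≤ γ := by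
  cases nonempty_fintype W
  intro m m' h
  induction hd : starDist m m' using Nat.strong_induction_on generalizing m with
  | _ d ih =>
  subst hd
  by_cases hstar : mapCon starValue m m'
  · exact starCon_le (fun m₁ m₂ hm => h₂ m₁ m₂ (starCon_le_edgeCon hm)) hstar
  obtain ⟨m₁, hm₁, h₁, hlt⟩ :
      ∃ m₁, γ m m₁ ∧ mapCon edgeValue m₁ m' ∧ starDist m₁ m' < starDist m m' := by
    by_cases htop : m.map (· ∘ Sum.inl) = m'.map (· ∘ Sum.inl)
    · obtain ⟨j, hj⟩ := not_forall.1 hstar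
      exact exists_closer_of_top_eq h₄ h htop hj
    · exact exists_closer_of_top_ne h₂ h htop
  exact γ.trans hm₁ (ih _ hlt h₁ rfl)

end TwoByMany

section MarkovBasis

variable {V : Type} [Fintype V] {G : SimpleGraph V}

theorem mon_sub_mon_mem_toricIdeal_iff {m m' : Multiset (V → Bool)} :
    mon m - mon m' ∈ toricIdeal G ↔ marginalCon G m m' := by
  rw [toricIdeal_eq_ker, ← binomialCon_iff, binomialCon_ker_toricMap, marginalCon]

theorem toricIdeal_eq_span_of_marginalCon_le [Nonempty V] (D : Set ℕ)
    (h : ∀ c, (∀ d ∈ D, ContainsMoves (marginalCon G) d c) → marginalCon G ≤ c) :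
    toricIdeal G = Ideal.span {f | f ∈ toricIdeal G ∧ ∃ d ∈ D, f.IsHomogeneous d} := by
  refine le_antisymm ?_ (Ideal.span_le.2 fun f hf => hf.1)
  rw [toricIdeal_eq_ker]
  refine ker_toricMap_le (h _ fun d hd m m' hm hcard => binomialCon_iff.2 (Ideal.subset_span ?_))
  rw [← toricIdeal_eq_ker]
  exact ⟨mon_sub_mon_mem_toricIdeal_iff.2 hm, d, hd,
    (hcard ▸ isHomogeneous_mon m).sub (hcard ▸ card_eq_of_marginalCon hm ▸ isHomogeneous_mon m')⟩

theorem genInDegLE_of_eq_span {D : Set ℕ} {n : ℕ} (hD : ∀ d ∈ D, d ≤ n)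
    (h : toricIdeal G = Ideal.span {f | f ∈ toricIdeal G ∧ ∃ d ∈ D, f.IsHomogeneous d}) :
    GenInDegLE G n := by
  refine le_antisymm ?_ (Ideal.span_le.2 fun f hf => hf.1)
  conv_lhs => rw [h]
  exact Ideal.span_mono fun f ⟨hf, d, hd, hfd⟩ => ⟨hf, hfd.totalDegree_le.trans (hD d hd)⟩

theorem not_genInDegLE_of_indispensable {m₁ m₂ : Multiset (V → Bool)} {n : ℕ} (hn : n < m₁.card)
    (hdisj : Disjoint m₁ m₂) (hcon : marginalCon G m₁ m₂)
    (hfib : ∀ m, marginalCon G m m₁ → m = m₁ ∨ m = m₂) : ¬ GenInDegLE G n := by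
  intro hgen
  have hne : m₁ ≠ m₂ := by
    rintro rfl
    simp [Multiset.bot_eq_zero.symm ▸ disjoint_self.1 hdisj] at hn
  have hmem := mon_sub_mon_mem_toricIdeal_iff.2 hcon
  rw [hgen] at hmem
  refine mon_sub_mon_notMem_span (R := ℂ) hne hdisj hfib (Ideal.span_mono ?_ hmem)
  exact fun f ⟨hf, hdeg⟩ => ⟨toricIdeal_eq_ker G ▸ hf, hdeg.trans_lt hn⟩

end MarkovBasis

section IndispensableQuartic

variable {W : Type*} [DecidableEq W] {p q : W} {α : Bool}

/-- The index string with values `t` on the first side, `t.1` at `q`, and the parity of `t`,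
twisted by `α`, at `p`. -/
def parityString (p q : W) (α : Bool) (t : Bool × Bool) : Fin 2 ⊕ W → Bool :=
  Sum.elim ![t.1, t.2] fun w => if w = p then α ^^ t.1 ^^ t.2 else if w = q then t.1 else false

/-- The four index strings `parityString p q α t`; the indispensable quartic is the difference of
the two monomials given by the possible values of `α`. -/
def parityStrings (p q : W) (α : Bool) : Multiset (Fin 2 ⊕ W → Bool) :=
  (univ : Finset (Bool × Bool)).val.map (parityString p q α)

theorem map_edgeValue_parityStrings_self (i : Fin 2) :
    (parityStrings p q α).map (edgeValue (i, p)) = (univ : Finset (Bool × Bool)).val := by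
  simp only [parityStrings, Multiset.map_map, Function.comp_def, edgeValue, parityString,
    Sum.elim_inl, Sum.elim_inr, if_true]
  revert i α
  decide

theorem map_edgeValue_parityStrings_of_ne {w : W} (hw : w ≠ p) (i : Fin 2) :
    (parityStrings p q α).map (edgeValue (i, w)) = (univ : Finset (Bool × Bool)).val.map
      fun t => (![t.1, t.2] i, if w = q then t.1 else false) := by
  simp only [parityStrings, Multiset.map_map, Function.comp_def, edgeValue, parityString,
    Sum.elim_inl, Sum.elim_inr, if_neg hw]

theorem parityStrings_edgeCon (α β : Bool) :
    mapCon edgeValue (parityStrings p q α) (parityStrings p q β) := by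
  rintro ⟨i, w⟩
  rcases eq_or_ne w p with rfl | hw
  · rw [map_edgeValue_parityStrings_self, map_edgeValue_parityStrings_self]
  · rw [map_edgeValue_parityStrings_of_ne hw, map_edgeValue_parityStrings_of_ne hw]

theorem disjoint_parityStrings {β : Bool} (h : α ≠ β) :
    Disjoint (parityStrings p q α) (parityStrings p q β) := by
  have twist_eq {γ : Bool} {I : Fin 2 ⊕ W → Bool} (hI : I ∈ parityStrings p q γ) :
      γ = (I (Sum.inr p) ^^ I (Sum.inl 0) ^^ I (Sum.inl 1)) := by
    obtain ⟨t, -, rfl⟩ := Multiset.mem_map.1 hI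
    simp only [parityString, Sum.elim_inl, Sum.elim_inr, if_true]
    clear hI
    revert γ t
    decide
  exact Multiset.disjoint_left.2 fun hα hβ => h ((twist_eq hα).trans (twist_eq hβ).symm)

/-- A Latin square of order two is the addition table of `Bool`, up to negation. -/
theorem eq_xor_of_injective {F : Bool × Bool → Bool}
    (hfst : Function.Injective fun t : Bool × Bool => (t.1, F t))
    (hsnd : Function.Injective fun t : Bool × Bool => (t.2, F t)) (t : Bool × Bool) :
    F t = (F (false, false) ^^ t.1 ^^ t.2) := by
  decide +revert

theorem map_top_eq_univ_of_edgeCon (hqp : q ≠ p) {m : Multiset (Fin 2 ⊕ W → Bool)}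
    (hm : mapCon edgeValue m (parityStrings p q α)) :
    m.map (fun I => (I (Sum.inl 0), I (Sum.inl 1))) = (univ : Finset (Bool × Bool)).val := by
  have eq_at_q (I : Fin 2 ⊕ W → Bool) (hI : I ∈ m) : I (Sum.inl 0) = I (Sum.inr q) := by
    have hmem := Multiset.mem_map_of_mem (edgeValue (0, q)) hI
    rw [hm, map_edgeValue_parityStrings_of_ne hqp] at hmem
    obtain ⟨t, -, ht⟩ := Multiset.mem_map.1 hmem
    rw [if_pos rfl] at ht
    exact (congrArg Prod.fst ht).symm.trans (congrArg Prod.snd ht)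
  calc m.map (fun I => (I (Sum.inl 0), I (Sum.inl 1)))
      = (m.map (edgeValue (1, q))).map Prod.swap := by
        rw [Multiset.map_map]
        exact Multiset.map_congr rfl fun I hI => Prod.ext (eq_at_q I hI) rfl
    _ = (univ : Finset (Bool × Bool)).val := by
        rw [hm, map_edgeValue_parityStrings_of_ne hqp]
        simp only [if_true]
        decide

theorem eq_parityStrings_of_edgeCon (hqp : q ≠ p) {m : Multiset (Fin 2 ⊕ W → Bool)}
    (hm : mapCon edgeValue m (parityStrings p q α)) : ∃ β, m = parityStrings p q β := by
  obtain ⟨g, rfl, hg⟩ := exists_section_of_map_eq_univ (map_top_eq_univ_of_edgeCon hqp hm)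
  have top_eq (t : Bool × Bool) (i : Fin 2) : g t (Sum.inl i) = ![t.1, t.2] i := by
    have := Prod.ext_iff.1 (hg t)
    fin_cases i
    · exact this.1
    · exact this.2
  have leaf_eq (t : Bool × Bool) {w : W} (hw : w ≠ p) :
      g t (Sum.inr w) = if w = q then t.1 else false := by
    have hmem := Multiset.mem_map_of_mem (edgeValue (0, w))
      (Multiset.mem_map_of_mem g (mem_univ_val t))
    rw [hm, map_edgeValue_parityStrings_of_ne hw] at hmem
    obtain ⟨s, -, hs⟩ := Multiset.mem_map.1 hmem
    obtain ⟨hfst, hsnd⟩ := Prod.ext_iff.1 hs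
    rw [← show s.1 = t.1 from hfst.trans (top_eq t 0)]
    exact hsnd.symm
  have injective_at_p (i : Fin 2) :
      Function.Injective fun t : Bool × Bool => (![t.1, t.2] i, g t (Sum.inr p)) := by
    have h := hm (i, p)
    rw [map_edgeValue_parityStrings_self, Multiset.map_map] at h
    intro s t hst
    refine Multiset.inj_on_of_nodup_map (h ▸ univ.nodup) s (mem_univ_val s) t (mem_univ_val t) ?_
    simpa only [Function.comp_apply, edgeValue, top_eq] using hst
  refine ⟨g (false, false) (Sum.inr p), congrArg (Multiset.map · _) (funext fun t => funext ?_)⟩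
  rintro (i | w)
  · exact top_eq t i
  · rcases eq_or_ne w p with rfl | hw
    · simpa [parityString] using eq_xor_of_injective (injective_at_p 0) (injective_at_p 1) t
    · simpa [parityString, hw] using leaf_eq t hw

end IndispensableQuartic

section CompleteBipartiteTwo

variable {W : Type} [Fintype W]

theorem toricIdeal_completeBipartite_two_eq_span [Nonempty W] :
    toricIdeal (completeBipartiteGraph (Fin 2) W) =
      Ideal.span {f | f ∈ toricIdeal (completeBipartiteGraph (Fin 2) W) ∧
        ∃ d ∈ ({2, 4} : Set ℕ), f.IsHomogeneous d} := by
  refine toricIdeal_eq_span_of_marginalCon_le {2, 4} fun c hc => ?_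
  rw [marginalCon_completeBipartiteGraph] at hc ⊢
  exact edgeCon_le (hc 2 (by simp)) (hc 4 (by simp))

theorem not_genInDegLE_completeBipartite_two [Nontrivial W] :
    ¬ GenInDegLE (completeBipartiteGraph (Fin 2) W) 3 := by
  classical
  obtain ⟨p, q, hpq⟩ := exists_pair_ne W
  refine not_genInDegLE_of_indispensable (m₁ := parityStrings p q false)
    (m₂ := parityStrings p q true) (by simp [parityStrings])
    (disjoint_parityStrings Bool.false_ne_true) ?_ fun m hm => ?_
  · rw [marginalCon_completeBipartiteGraph]
    exact parityStrings_edgeCon false true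
  · rw [marginalCon_completeBipartiteGraph] at hm
    obtain ⟨_ | _, rfl⟩ := eq_parityStrings_of_edgeCon hpq.symm hm
    · exact .inl rfl
    · exact .inr rfl

theorem completeBipartite_two_markovWidth_general [Nontrivial W] :
    toricIdeal (completeBipartiteGraph (Fin 2) W) =
      Ideal.span {f : MvPolynomial ((Fin 2 ⊕ W) → Bool) ℂ |
        f ∈ toricIdeal (completeBipartiteGraph (Fin 2) W) ∧
          (f.IsHomogeneous 2 ∨ f.IsHomogeneous 4)} ∧
    ¬ GenInDegLE (completeBipartiteGraph (Fin 2) W) 3 ∧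
    markovWidth (completeBipartiteGraph (Fin 2) W) = 4 := by
  have hspan := toricIdeal_completeBipartite_two_eq_span (W := W)
  have hfour : GenInDegLE (completeBipartiteGraph (Fin 2) W) 4 :=
    genInDegLE_of_eq_span (by simp) hspan
  have hthree := not_genInDegLE_completeBipartite_two (W := W)
  refine ⟨?_, hthree, markovWidth_eq_succ_iff.2 ⟨hfour, hthree⟩⟩
  simpa only [Set.mem_insert_iff, Set.mem_singleton_iff, exists_eq_or_imp, exists_eq_left]
    using hspan

end CompleteBipartiteTwo

/-- for `n ≥ 2`, the toric ideal of the complete bipartite graph `K_{2,n}` is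
generated by its homogeneous elements of degrees 2 and 4, it is not generated in degree `≤ 3`,
and hence `μ(K_{2,n}) = 4`. -/
theorem completeBipartite_two_markovWidth (n : ℕ) (hn : 2 ≤ n) :
    toricIdeal (completeBipartiteGraph (Fin 2) (Fin n)) =
      Ideal.span {f : MvPolynomial ((Fin 2 ⊕ Fin n) → Bool) ℂ |
        f ∈ toricIdeal (completeBipartiteGraph (Fin 2) (Fin n)) ∧
          (f.IsHomogeneous 2 ∨ f.IsHomogeneous 4)} ∧
    ¬ GenInDegLE (completeBipartiteGraph (Fin 2) (Fin n)) 3 ∧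
    markovWidth (completeBipartiteGraph (Fin 2) (Fin n)) = 4 := by
  have : Nontrivial (Fin n) := Fin.nontrivial_iff_two_le.2 hn
  exact completeBipartite_two_markovWidth_general

end BinaryGraphModels
end
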